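/- arXiv:math/0611310 — 4 statements merged into one kernel-verified Lean document; each statement's English description precedes it below -/
import Mathlib

section
/- (van der Corput lemma) Let G' be a second countable topological group with a right invariant measure μ' on its σ-algebra Σ' of Borel sets, let (Λ'_n) be a uniform Følner sequence in a Borel measurable subsemigroup K' ⊆ G', let H be a Hilbert space, and let f : G' → H be a bounded function such that ⟨f(·), x⟩ is Borel measurable for all x ∈ H and ⟨f(·), f(·)⟩ : G' × G' → ℂ is Borel measurable. Assume γ_h := lim_{n→∞} (1/μ'(Λ'_n)) ∫_{Λ'_n} ⟨f(g), f(gh)⟩ dg exists for all h ∈ G', and that lim_{m→∞} (1/μ'(Λ'_m)²) ∫_{Λ'_m} ∫_{Λ'_m} γ_{h₁⁻¹h₂} dh₁ dh₂ = 0. Then lim_{n→∞} (1/μ'(Λ'_n)) ∫_{Λ'_n} f dμ' = 0. -/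
open MeasureTheory Filter Topology
open scoped Pointwise

/-- Weak Cauchy-Schwarz: weak integral of a bounded weakly measurable function. -/
lemma vdc_weak_cs {X : Type*} [MeasurableSpace X] (ν : Measure X) [IsProbabilityMeasure ν]
    {H : Type*} [NormedAddCommGroup H] [InnerProductSpace ℂ H] [CompleteSpace H]
    (F : X → H) (C : ℝ) (hC : ∀ g, ‖F g‖ ≤ C)
    (hweak : ∀ x : H, Measurable fun g => (inner ℂ (F g) x : ℂ))
    (hff : Measurable fun p : X × X => (inner ℂ (F p.1) (F p.2) : ℂ)) (x : H) (hx : ‖x‖ ≤ 1) :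
    ‖∫ h, (inner ℂ (F h) x : ℂ) ∂ν‖ ^ 2 ≤
      (∫ p, (inner ℂ (F p.1) (F p.2) : ℂ) ∂(ν.prod ν)).re := by
  have hint : ∀ y : H, Integrable (fun h => (inner ℂ (F h) y : ℂ)) ν := fun y =>
    Integrable.of_bound (hweak y).aestronglyMeasurable (C * ‖y‖) (ae_of_all _ fun h =>
      (norm_inner_le_norm _ _).trans (mul_le_mul_of_nonneg_right (hC h) (norm_nonneg _)))
  let L : H →L[ℂ] ℂ := LinearMap.mkContinuous
    { toFun := fun y => ∫ h, (inner ℂ (F h) y : ℂ) ∂ν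
      map_add' := fun y z => by
        simp only [inner_add_right]
        exact integral_add (hint y) (hint z)
      map_smul' := fun c y => by
        simp only [inner_smul_right]
        exact integral_const_mul c _ } C (fun y => by
      have := norm_integral_le_of_norm_le_const (μ := ν) (f := fun h => (inner ℂ (F h) y : ℂ))
        (C := C * ‖y‖) (ae_of_all _ fun h =>
        (norm_inner_le_norm _ _).trans (mul_le_mul_of_nonneg_right (hC h) (norm_nonneg _)))
      simpa using this)
  have hL : ∀ y, L y = ∫ h, (inner ℂ (F h) y : ℂ) ∂ν := fun y => rfl
  set v := (InnerProductSpace.toDual ℂ H).symm L with hv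
  have hvL : ∀ y, (inner ℂ v y : ℂ) = ∫ h, (inner ℂ (F h) y : ℂ) ∂ν := fun y => by
    rw [hv, InnerProductSpace.toDual_symm_apply, hL]
  have hpint : Integrable (fun p : X × X => (inner ℂ (F p.1) (F p.2) : ℂ)) (ν.prod ν) :=
    Integrable.of_bound hff.aestronglyMeasurable (C * C) (ae_of_all _ fun p =>
      (norm_inner_le_norm _ _).trans (mul_le_mul (hC _) (hC _) (norm_nonneg _)
        ((norm_nonneg _).trans (hC p.1))))
  have hvv : (∫ p, (inner ℂ (F p.1) (F p.2) : ℂ) ∂(ν.prod ν)) = inner ℂ v v := by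
    rw [integral_prod_symm _ hpint]
    have : ∀ y, ∫ x, (inner ℂ (F x) (F y) : ℂ) ∂ν = (starRingEnd ℂ) (inner ℂ (F y) v) := by
      intro y; rw [inner_conj_symm, hvL]
    simp only [this]
    rw [integral_conj, ← hvL, inner_conj_symm]
  rw [hvv, ← hvL]
  have h2 : (inner ℂ v v : ℂ).re = ‖v‖ ^ 2 := by
    have := inner_self_eq_norm_sq (𝕜 := ℂ) v
    simpa using this
  rw [h2]
  have h1 := norm_inner_le_norm (𝕜 := ℂ) v x
  have : ‖(inner ℂ v x : ℂ)‖ ≤ ‖v‖ := h1.trans (mul_le_of_le_one_right (norm_nonneg _) hx)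
  gcongr

/-- Shifting by a group element. -/
lemma vdc_shift {G' : Type*} [Group G'] [TopologicalSpace G'] [IsTopologicalGroup G']
    [SecondCountableTopology G'] [MeasurableSpace G'] [BorelSpace G']
    (μ : Measure G')
    (hRight : ∀ (V : Set G') (g : G'), MeasurableSet V → μ (V * {g}) = μ V)
    (T : Set G') (hT : MeasurableSet T) (hfin : μ T < ⊤) (h : G') (φ : G' → ℂ)
    (hφ : Measurable φ) (B : ℝ) (hB : ∀ g, ‖φ g‖ ≤ B) :
    ‖∫ g in T, φ (g * h) ∂μ - ∫ g in T, φ g ∂μ‖ ≤ B * (μ (symmDiff T (T * {h}))).toReal := by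
  have hpre : ∀ (V : Set G') (g : G'), V * {g} = (fun x => x * g⁻¹) ⁻¹' V := by
    intro V g
    rw [Set.mul_singleton, Set.image_mul_right]
  have hSm : MeasurableSet (T * {h}) := by
    rw [hpre]; exact measurable_mul_const _ hT
  have hmp : MeasurePreserving (fun x : G' => x * h) μ μ := by
    refine ⟨measurable_mul_const _, ?_⟩
    ext V hV
    rw [Measure.map_apply (measurable_mul_const _) hV, ← hRight V h⁻¹ hV, hpre, inv_inv]
  have hSfin : μ (T * {h}) < ⊤ := by rwa [hRight T h hT]
  have h1 : ∫ g in T, φ (g * h) ∂μ = ∫ g in T * {h}, φ g ∂μ := by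
    rw [← hmp.setIntegral_preimage_emb (MeasurableEquiv.mulRight h).measurableEmbedding φ (T * {h})]
    congr 2
    rw [Set.mul_singleton, Set.preimage_image_eq _ (mul_left_injective h)]
  rw [h1]
  set S := T * {h} with hS
  have hint : ∀ U : Set G', μ U < ⊤ → IntegrableOn φ U μ := fun U hU =>
    Measure.integrableOn_of_bounded hU.ne hφ.aestronglyMeasurable (ae_of_all _ hB)
  have e1 := integral_inter_add_sdiff hT (hint S hSfin)
  have e2 := integral_inter_add_sdiff hSm (hint T hfin)
  rw [← e1, ← e2, Set.inter_comm T S, add_sub_add_left_eq_sub]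
  have f1 : μ (S \ T) < ⊤ := (measure_mono Set.sdiff_subset).trans_lt hSfin
  have f2 : μ (T \ S) < ⊤ := (measure_mono Set.sdiff_subset).trans_lt hfin
  have b1 := norm_setIntegral_le_of_norm_le_const (μ := μ) f1 (f := φ) (C := B) (fun x _ => hB x)
  have b2 := norm_setIntegral_le_of_norm_le_const (μ := μ) f2 (f := φ) (C := B) (fun x _ => hB x)
  have hsd : (μ (symmDiff T S)).toReal = (μ (T \ S)).toReal + (μ (S \ T)).toReal := by
    rw [Set.symmDiff_def, measure_union disjoint_sdiff_sdiff (hSm.diff hT),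
      ENNReal.toReal_add f2.ne f1.ne]
  rw [hsd]
  simp only [Measure.real] at b1 b2
  refine (norm_sub_le _ _).trans ?_
  linarith

/-- Core argument for a sequence of probability measures. -/
lemma vdc_core {G' : Type*} [Group G'] [TopologicalSpace G'] [IsTopologicalGroup G']
    [SecondCountableTopology G'] [MeasurableSpace G'] [BorelSpace G']
    (P : ℕ → Measure G') [∀ n, IsProbabilityMeasure (P n)]
    (hU : ∀ᶠ m in atTop, ∀ ε > (0 : ℝ), ∀ᶠ n in atTop, ∀ᵐ h ∂(P m), ∀ (φ : G' → ℂ) (B : ℝ),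
      Measurable φ → (∀ g, ‖φ g‖ ≤ B) → ‖∫ g, φ (g * h) ∂(P n) - ∫ g, φ g ∂(P n)‖ ≤ B * ε)
    {H : Type*} [NormedAddCommGroup H] [InnerProductSpace ℂ H] [CompleteSpace H]
    (f : G' → H) (C : ℝ) (hC0 : 0 < C) (hC : ∀ g, ‖f g‖ ≤ C)
    (hweak : ∀ x : H, Measurable fun g => (inner ℂ (f g) x : ℂ))
    (hff : Measurable fun p : G' × G' => (inner ℂ (f p.1) (f p.2) : ℂ))
    (γ : G' → ℂ)
    (hγ : ∀ h : G', Tendsto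
      (fun n => ∫ g, (inner ℂ (f g) (f (g * h)) : ℂ) ∂(P n)) atTop (𝓝 (γ h)))
    (hγ0 : Tendsto (fun m => ∫ h₁, ∫ h₂, γ (h₁⁻¹ * h₂) ∂(P m) ∂(P m)) atTop (𝓝 0))
    (ε : ℝ) (hε : 0 < ε) :
    ∀ᶠ n in atTop, ∀ x : H, ‖x‖ ≤ 1 → ‖∫ g, (inner ℂ (f g) x : ℂ) ∂(P n)‖ ≤ ε := by
  have hbb : ∀ a b, ‖(inner ℂ (f a) (f b) : ℂ)‖ ≤ C * C := fun a b =>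
    (norm_inner_le_norm _ _).trans (mul_le_mul (hC _) (hC _) (norm_nonneg _) hC0.le)
  obtain ⟨η, hη0, hη1, hη2⟩ : ∃ η > 0, C * η ≤ ε / 4 ∧ (C * C + 2) * η ≤ ε ^ 2 / 2 := by
    refine ⟨min (ε / 4 / C) (ε ^ 2 / 2 / (C * C + 2)), by positivity, ?_, ?_⟩
    · rw [mul_comm, ← le_div_iff₀ hC0]; exact min_le_left _ _
    · rw [mul_comm, ← le_div_iff₀ (by positivity)]; exact min_le_right _ _
  have hγ0' : ∀ᶠ m in atTop, ‖∫ h₁, ∫ h₂, γ (h₁⁻¹ * h₂) ∂(P m) ∂(P m)‖ < η := by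
    have := hγ0.norm.eventually_lt_const (u := η) (by simpa using hη0)
    simpa using this
  obtain ⟨m, hm1, hm2⟩ := (hU.and hγ0').exists
  set Q := (P m).prod (P m) with hQ
  -- the averages at level n as functions of (h₁,h₂)
  have mE : ∀ n, StronglyMeasurable (fun p : G' × G' =>
      ∫ g, (inner ℂ (f g) (f (g * (p.1⁻¹ * p.2))) : ℂ) ∂(P n)) := by
    intro n
    apply StronglyMeasurable.integral_prod_right (f := fun (p : G' × G') (g : G') =>
      (inner ℂ (f g) (f (g * (p.1⁻¹ * p.2))) : ℂ))
    apply Measurable.stronglyMeasurable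
    exact hff.comp (measurable_snd.prodMk (measurable_snd.mul
      ((measurable_fst.comp measurable_fst).inv.mul (measurable_snd.comp measurable_fst))))
  have bE : ∀ n (h : G'), ‖∫ g, (inner ℂ (f g) (f (g * h)) : ℂ) ∂(P n)‖ ≤ C * C := by
    intro n h
    have := norm_integral_le_of_norm_le_const (μ := P n)
      (f := fun g => (inner ℂ (f g) (f (g * h)) : ℂ)) (C := C * C) (ae_of_all _ fun g => hbb _ _)
    simpa using this
  have iγ : Integrable (fun p : G' × G' => γ (p.1⁻¹ * p.2)) Q := by
    refine Integrable.of_bound (C := C * C) ?_ ?_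
    · exact aestronglyMeasurable_of_tendsto_ae atTop (fun n => (mE n).aestronglyMeasurable)
        (ae_of_all _ fun p => hγ _)
    · exact ae_of_all _ fun p => le_of_tendsto (hγ _).norm (Eventually.of_forall fun n => bE n _)
  have hγQ : ‖∫ p, γ (p.1⁻¹ * p.2) ∂Q‖ < η := by
    rw [hQ, integral_prod _ iγ]; exact hm2
  have hDCT : Tendsto (fun n => ∫ p : G' × G',
      ∫ g, (inner ℂ (f g) (f (g * (p.1⁻¹ * p.2))) : ℂ) ∂(P n) ∂Q) atTop
      (𝓝 (∫ p, γ (p.1⁻¹ * p.2) ∂Q)) :=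
    tendsto_integral_of_dominated_convergence (fun _ => C * C)
      (fun n => (mE n).aestronglyMeasurable) (integrable_const _)
      (fun n => ae_of_all _ fun p => bE n _) (ae_of_all _ fun p => hγ _)
  have hD2 := hDCT.norm.eventually_lt_const hγQ
  filter_upwards [hD2, hm1 η hη0] with n hn1 hn2 x hx
  have iE : Integrable (fun p : G' × G' =>
      ∫ g, (inner ℂ (f g) (f (g * (p.1⁻¹ * p.2))) : ℂ) ∂(P n)) Q :=
    Integrable.of_bound (mE n).aestronglyMeasurable (C * C) (ae_of_all _ fun p => bE n _)
  -- the function on triples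
  have i3 : Integrable (fun q : G' × (G' × G') =>
      (inner ℂ (f (q.1 * q.2.1)) (f (q.1 * q.2.2)) : ℂ)) ((P n).prod Q) := by
    refine Integrable.of_bound (C := C * C) ?_ (ae_of_all _ fun q => hbb _ _)
    apply Measurable.aestronglyMeasurable
    exact hff.comp ((measurable_fst.mul (measurable_fst.comp measurable_snd)).prodMk
      (measurable_fst.mul (measurable_snd.comp measurable_snd)))
  set Bg : G' → ℂ := fun g => ∫ p : G' × G', (inner ℂ (f (g * p.1)) (f (g * p.2)) : ℂ) ∂Q with hBg
  have iB : Integrable Bg (P n) := i3.integral_prod_left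
  have hBbound : ‖∫ g, Bg g ∂(P n)‖ ≤ (C * C + 2) * η := by
    have hsw : ∫ g, Bg g ∂(P n) = ∫ p : G' × G',
        ∫ g, (inner ℂ (f (g * p.1)) (f (g * p.2)) : ℂ) ∂(P n) ∂Q := by
      simp only [hBg]
      exact integral_integral_swap (f := fun (g : G') (p : G' × G') =>
        (inner ℂ (f (g * p.1)) (f (g * p.2)) : ℂ)) i3
    have hd : ‖∫ g, Bg g ∂(P n) - ∫ p : G' × G',
        ∫ g, (inner ℂ (f g) (f (g * (p.1⁻¹ * p.2))) : ℂ) ∂(P n) ∂Q‖ ≤ C * C * η := by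
      rw [hsw, ← integral_sub i3.integral_prod_right iE]
      have hae : ∀ᵐ p : G' × G' ∂Q,
          ‖∫ g, (inner ℂ (f (g * p.1)) (f (g * p.2)) : ℂ) ∂(P n) -
            ∫ g, (inner ℂ (f g) (f (g * (p.1⁻¹ * p.2))) : ℂ) ∂(P n)‖ ≤ C * C * η := by
        have hq := (Measure.quasiMeasurePreserving_fst (μ := P m) (ν := P m)).ae hn2
        filter_upwards [hq] with p hp
        have := hp (fun g => (inner ℂ (f g) (f (g * (p.1⁻¹ * p.2))) : ℂ)) (C * C)
          (hff.comp (measurable_id.prodMk (measurable_mul_const _))) (fun g => hbb _ _)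
        simpa [mul_assoc] using this
      have := norm_integral_le_of_norm_le_const hae
      simpa using this
    have := norm_le_norm_add_norm_sub' (∫ g, Bg g ∂(P n)) (∫ p : G' × G',
        ∫ g, (inner ℂ (f g) (f (g * (p.1⁻¹ * p.2))) : ℂ) ∂(P n) ∂Q)
    linarith
  have hφb : ∀ g, ‖(inner ℂ (f g) x : ℂ)‖ ≤ C := fun g =>
    (norm_inner_le_norm _ _).trans ((mul_le_of_le_one_right (norm_nonneg _) hx).trans (hC g))
  have i2 : Integrable (fun q : G' × G' => (inner ℂ (f (q.1 * q.2)) x : ℂ))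
      ((P n).prod (P m)) :=
    Integrable.of_bound ((hweak x).comp measurable_mul).aestronglyMeasurable C
      (ae_of_all _ fun q => hφb _)
  set a : G' → ℂ := fun g => ∫ h, (inner ℂ (f (g * h)) x : ℂ) ∂(P m) with ha
  have ia : Integrable a (P n) := i2.integral_prod_left
  have haB : ∀ g, ‖a g‖ ^ 2 ≤ (Bg g).re := fun g =>
    vdc_weak_cs (P m) (fun h => f (g * h)) C (fun h => hC _)
      (fun y => (hweak y).comp (measurable_const_mul g))
      (hff.comp ((measurable_fst.const_mul g).prodMk (measurable_snd.const_mul g))) x hx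
  have hA : ‖∫ g, a g ∂(P n) - ∫ g, (inner ℂ (f g) x : ℂ) ∂(P n)‖ ≤ C * η := by
    have hsw : ∫ g, a g ∂(P n) = ∫ h, ∫ g, (inner ℂ (f (g * h)) x : ℂ) ∂(P n) ∂(P m) := by
      simp only [ha]
      exact integral_integral_swap (f := fun (g h : G') => (inner ℂ (f (g * h)) x : ℂ)) i2
    have hc : ∫ g, (inner ℂ (f g) x : ℂ) ∂(P n) =
        ∫ h, (∫ g, (inner ℂ (f g) x : ℂ) ∂(P n)) ∂(P m) := by simp
    rw [hsw, hc, ← integral_sub i2.integral_prod_right (integrable_const _)]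
    have hae : ∀ᵐ h ∂(P m), ‖∫ g, (inner ℂ (f (g * h)) x : ℂ) ∂(P n) -
        ∫ g, (inner ℂ (f g) x : ℂ) ∂(P n)‖ ≤ C * η := by
      filter_upwards [hn2] with h hh
      exact hh (fun g => (inner ℂ (f g) x : ℂ)) C (hweak x) hφb
    have := norm_integral_le_of_norm_le_const hae
    simpa using this
  have hB2 : ‖∫ g, a g ∂(P n)‖ ≤ ε / 2 + (ε ^ 2 / 2) / (2 * ε) := by
    have iBr : Integrable (fun g => (Bg g).re) (P n) := iB.re
    calc ‖∫ g, a g ∂(P n)‖ ≤ ∫ g, ‖a g‖ ∂(P n) := norm_integral_le_integral_norm _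
      _ ≤ ∫ g, (ε / 2 + (Bg g).re / (2 * ε)) ∂(P n) := by
          refine integral_mono ia.norm ((integrable_const _).add (iBr.div_const _)) fun g => ?_
          have h1 := haB g
          have h2 : ‖a g‖ ≤ ε / 2 + ‖a g‖ ^ 2 / (2 * ε) := by
            have : ε / 2 + ‖a g‖ ^ 2 / (2 * ε) - ‖a g‖ = (ε - ‖a g‖) ^ 2 / (2 * ε) := by
              field_simp; ring
            have : 0 ≤ (ε - ‖a g‖) ^ 2 / (2 * ε) := by positivity
            linarith
          refine h2.trans ?_
          show ε / 2 + ‖a g‖ ^ 2 / (2 * ε) ≤ ε / 2 + (Bg g).re / (2 * ε)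
          gcongr
      _ = ε / 2 + (∫ g, Bg g ∂(P n)).re / (2 * ε) := by
          rw [integral_add (integrable_const _) (iBr.div_const _), integral_div, integral_div]
          have : ∫ g, (Bg g).re ∂(P n) = (∫ g, Bg g ∂(P n)).re := integral_re iB
          rw [this]; simp
      _ ≤ _ := by
          have := (Complex.re_le_norm (∫ g, Bg g ∂(P n))).trans (hBbound.trans hη2)
          gcongr
  have hB3 : (ε ^ 2 / 2) / (2 * ε) = ε / 4 := by field_simp; norm_num
  have := norm_le_norm_add_norm_sub (∫ g, a g ∂(P n)) (∫ g, (inner ℂ (f g) x : ℂ) ∂(P n))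
  linarith

/-- **Lemma 5.1(1), the "van der Corput" lemma.**  Let `G'` be a second countable topological
group with a right invariant Borel measure `μ`, `(Λ n)` a uniform Følner sequence in a Borel
measurable subsemigroup `K ⊆ G'`, `H` a Hilbert space and `f : G' → H` bounded and weakly
Borel measurable with `⟨f(·), f(·)⟩` Borel measurable.  If
`γ h = lim_n (1/μ(Λ n)) ∫_{Λ n} ⟨f(g), f(gh)⟩ dg` exists for all `h` and
`lim_m (1/μ(Λ m)²) ∫_{Λ m} ∫_{Λ m} γ (h₁⁻¹ h₂) dh₁ dh₂ = 0`, then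
`lim_n (1/μ(Λ n)) ∫_{Λ n} f dμ = 0`. -/
theorem van_der_Corput
    -- a second countable topological group G' with right invariant Borel measure μ
    {G' : Type*} [Group G'] [TopologicalSpace G'] [IsTopologicalGroup G']
    [SecondCountableTopology G'] [MeasurableSpace G'] [BorelSpace G']
    (μ : Measure G')
    (hRight : ∀ (V : Set G') (g : G'), MeasurableSet V → μ (V * {g}) = μ V)
    -- a Borel measurable subsemigroup K of G'
    (K : Set G') (hKmeas : MeasurableSet K) (hKmul : ∀ g ∈ K, ∀ h ∈ K, g * h ∈ K)
    -- a uniform Følner sequence (Λ n) in K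
    (Λ : ℕ → Set G') (hΛmeas : ∀ n, MeasurableSet (Λ n) ∧ Λ n ⊆ K)
    (hΛfin : ∀ᶠ n in atTop, 0 < μ (Λ n) ∧ μ (Λ n) < ⊤)
    (hΛfolner : ∀ g ∈ K, Tendsto
      (fun n => (μ (symmDiff (Λ n) (Λ n * {g}))).toReal / (μ (Λ n)).toReal) atTop (𝓝 0))
    (hΛunif : ∀ᶠ m in atTop, ∀ ε > (0 : ℝ), ∀ᶠ n in atTop, ∀ g ∈ Λ m,
      (μ (symmDiff (Λ n) (Λ n * {g}))).toReal ≤ ε * (μ (Λ n)).toReal)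
    -- a Hilbert space H and a bounded, weakly measurable function f : G' → H
    {H : Type*} [NormedAddCommGroup H] [InnerProductSpace ℂ H] [CompleteSpace H]
    (f : G' → H) (hbdd : ∃ C : ℝ, ∀ g, ‖f g‖ ≤ C)
    (hweak : ∀ x : H, Measurable fun g => (inner ℂ (f g) x : ℂ))
    (hff : Measurable fun p : G' × G' => (inner ℂ (f p.1) (f p.2) : ℂ))
    -- γ h is the limit of the correlation averages
    (γ : G' → ℂ)
    (hγ : ∀ h : G', Tendsto
      (fun n => (μ (Λ n)).toReal⁻¹ • ∫ g in Λ n, (inner ℂ (f g) (f (g * h)) : ℂ) ∂μ)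
      atTop (𝓝 (γ h)))
    -- the van der Corput condition (5.1)
    (hγ0 : Tendsto
      (fun m => ((μ (Λ m)).toReal ^ 2)⁻¹ • ∫ h₁ in Λ m, ∫ h₂ in Λ m, γ (h₁⁻¹ * h₂) ∂μ ∂μ)
      atTop (𝓝 0)) :
    -- conclusion
    Tendsto (fun n => (μ (Λ n)).toReal⁻¹ • ∫ g in Λ n, f g ∂μ) atTop (𝓝 (0 : H)) := by
  obtain ⟨N, hN⟩ := eventually_atTop.1 hΛfin
  obtain ⟨C₀, hC₀⟩ := hbdd
  set C := max C₀ 1 with hCdef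
  have hC0 : 0 < C := lt_of_lt_of_le one_pos (le_max_right _ _)
  have hC : ∀ g, ‖f g‖ ≤ C := fun g => (hC₀ g).trans (le_max_left _ _)
  let P : ℕ → Measure G' := fun n => (μ (Λ (n + N)))⁻¹ • μ.restrict (Λ (n + N))
  have hpos : ∀ n, 0 < μ (Λ (n + N)) := fun n => (hN _ (Nat.le_add_left _ _)).1
  have hfin : ∀ n, μ (Λ (n + N)) < ⊤ := fun n => (hN _ (Nat.le_add_left _ _)).2
  have hPprob : ∀ n, IsProbabilityMeasure (P n) := fun n => ⟨by
    simp only [P, Measure.smul_apply, Measure.restrict_apply_univ, smul_eq_mul]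
    exact ENNReal.inv_mul_cancel (hpos n).ne' (hfin n).ne⟩
  have hPintC : ∀ (n : ℕ) (φ : G' → ℂ),
      ∫ g, φ g ∂(P n) = (μ (Λ (n + N))).toReal⁻¹ • ∫ g in Λ (n + N), φ g ∂μ := by
    intro n φ
    simp only [P]
    rw [integral_smul_measure, ENNReal.toReal_inv]
  have hU : ∀ᶠ m in atTop, ∀ ε > (0 : ℝ), ∀ᶠ n in atTop, ∀ᵐ h ∂(P m), ∀ (φ : G' → ℂ) (B : ℝ),
      Measurable φ → (∀ g, ‖φ g‖ ≤ B) →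
        ‖∫ g, φ (g * h) ∂(P n) - ∫ g, φ g ∂(P n)‖ ≤ B * ε := by
    filter_upwards [(tendsto_add_atTop_nat N).eventually hΛunif] with m hm ε hε
    filter_upwards [(tendsto_add_atTop_nat N).eventually (hm ε hε)] with n hn
    have hmem : ∀ᵐ h ∂(P m), h ∈ Λ (m + N) :=
      Measure.ae_smul_measure (ae_restrict_mem (hΛmeas _).1) _
    filter_upwards [hmem] with h hh φ B hφ hB
    have hr : 0 < (μ (Λ (n + N))).toReal := ENNReal.toReal_pos (hpos n).ne' (hfin n).ne
    have hB0 : 0 ≤ B := (norm_nonneg _).trans (hB 1)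
    rw [hPintC, hPintC, ← smul_sub, norm_smul, norm_inv, Real.norm_of_nonneg hr.le,
      inv_mul_le_iff₀ hr]
    refine (vdc_shift μ hRight _ (hΛmeas _).1 (hfin n) h φ hφ B hB).trans ?_
    calc _ ≤ B * (ε * (μ (Λ (n + N))).toReal) := mul_le_mul_of_nonneg_left (hn h hh) hB0
      _ = _ := by ring
  have hγ' : ∀ h : G', Tendsto
      (fun n => ∫ g, (inner ℂ (f g) (f (g * h)) : ℂ) ∂(P n)) atTop (𝓝 (γ h)) := by
    intro h
    have := (hγ h).comp (tendsto_add_atTop_nat N)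
    refine this.congr fun n => ?_
    rw [hPintC]; rfl
  have hγ0' : Tendsto (fun m => ∫ h₁, ∫ h₂, γ (h₁⁻¹ * h₂) ∂(P m) ∂(P m)) atTop (𝓝 0) := by
    have := hγ0.comp (tendsto_add_atTop_nat N)
    refine this.congr fun n => ?_
    simp only [hPintC, Function.comp]
    rw [integral_smul, smul_smul, sq, mul_inv]
  have key := vdc_core P hU f C hC0 hC hweak hff γ hγ' hγ0'
  rw [← tendsto_add_atTop_iff_nat N, Metric.tendsto_atTop']
  intro ε hε
  obtain ⟨M, hM⟩ := eventually_atTop.1 (key (ε / 2) (half_pos hε))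
  refine ⟨M, fun n hn => ?_⟩
  rw [dist_zero_right]
  have hI : (μ (Λ (n + N))).toReal⁻¹ • ∫ g in Λ (n + N), f g ∂μ = ∫ g, f g ∂(P n) := by
    simp only [P]
    rw [integral_smul_measure, ENNReal.toReal_inv]
  rw [hI]
  set I := ∫ g, f g ∂(P n) with hIdef
  by_cases hI0 : I = 0
  · rw [hI0, norm_zero]; exact hε
  have hint : Integrable f (P n) := by
    by_contra hni
    exact hI0 (integral_undef hni)
  have hIn : 0 < ‖I‖ := norm_pos_iff.2 hI0
  set x : H := ((‖I‖⁻¹ : ℝ) : ℂ) • I with hx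
  have hx1 : ‖x‖ ≤ 1 := by
    rw [hx, norm_smul, Complex.norm_real, norm_inv, norm_norm, inv_mul_cancel₀ hIn.ne']
  have h1 := hM n hn.le x hx1
  have h2 : ∫ g, (inner ℂ (f g) x : ℂ) ∂(P n) = inner ℂ I x := by
    have h3 : ∀ g, (inner ℂ (f g) x : ℂ) = (starRingEnd ℂ) (inner ℂ x (f g)) := fun g =>
      (inner_conj_symm _ _).symm
    simp only [h3]
    rw [integral_conj, integral_inner hint, inner_conj_symm]
  rw [h2, hx, inner_smul_right, inner_self_eq_norm_sq_to_K, norm_mul, norm_pow,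
    Complex.norm_real, norm_inv, norm_norm] at h1
  have h4 : ‖((‖I‖ : ℝ) : ℂ)‖ = ‖I‖ := by simp
  have h5 : ‖I‖⁻¹ * ‖I‖ ^ 2 ≤ ε / 2 := by simpa using h1
  have h6 : ‖I‖⁻¹ * ‖I‖ ^ 2 = ‖I‖ := by field_simp
  linarith
end

section
/- (uniform van der Corput lemma) Let G' be a second countable topological group whose counting measure μ' on the Borel σ-algebra Σ' is right invariant, let K' ⊆ G' be a Borel measurable abelian subsemigroup, and let (Λ'_n) be a uniform Følner sequence in K' (so Λ'_n is a finite non-empty set for n large enough). Let H be a Hilbert space and f : G' → H a bounded function such that ⟨f(·), x⟩ is Borel measurable for all x ∈ H and ⟨f(·), f(·)⟩ : G' × G' → ℂ is Borel measurable. Assume γ_h := lim_{n→∞} (1/μ'(Λ'_n)) Σ_{g ∈ Λ'_n} ⟨f(g), f(gh)⟩ exists for all h ∈ G', that lim_{m→∞} (1/μ'(Λ'_m)²) Σ_{h₁ ∈ Λ'_m} Σ_{h₂ ∈ Λ'_m} γ_{h₁⁻¹h₂} = 0, and that lim_{n→∞} sup_{g₁ ∈ K'} | (1/μ'(Λ'_n))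 Σ_{g ∈ Λ'_n g₁} ⟨f(g), f(gh)⟩ − γ_h | = 0 for all h ∈ G'. Then lim_{n→∞} sup_{g₁ ∈ K'} ‖ (1/μ'(Λ'_n)) Σ_{g ∈ Λ'_n g₁} f(g) ‖ = 0. -/
open MeasureTheory Filter Topology
open scoped Pointwise

lemma vdc_meas_finite {G : Type*} [TopologicalSpace G] [R1Space G] [MeasurableSpace G]
    [BorelSpace G] (A : Set G) (hA : A.Finite)
    (hsat : ∀ x y, Inseparable x y → x ∈ A → y ∈ A) : MeasurableSet A := by
  have : A = ⋃ a ∈ A, closure {a} := by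
    ext x
    simp only [Set.mem_iUnion, exists_prop]
    constructor
    · intro hx
      exact ⟨x, hx, subset_closure rfl⟩
    · rintro ⟨a, ha, hx⟩
      have h1 : a ⤳ x := specializes_iff_mem_closure.mpr hx
      exact hsat a x h1.inseparable ha
  rw [this]
  exact (hA.isClosed_biUnion (fun _ _ => isClosed_closure)).measurableSet

lemma vdc_integral {G : Type*} [TopologicalSpace G] [R1Space G] [MeasurableSpace G]
    [BorelSpace G] {E : Type*} [NormedAddCommGroup E] [NormedSpace ℝ E] [CompleteSpace E]
    (S : Set G) (hS : MeasurableSet S) (F : Finset G) (hF : (F : Set G) = S) (φ : G → E)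
    (hφ : ∀ x y, Inseparable x y → φ x = φ y) :
    ∫ g in S, φ g ∂Measure.count = ∑ g ∈ F, φ g := by
  classical
  have hfin : S.Finite := hF ▸ F.finite_toSet
  set ψ : G → E := S.indicator φ with hψ
  have hψi : ∀ x y, Inseparable x y → ψ x = ψ y := by
    intro x y hxy
    have := hxy.mem_measurableSet_iff hS
    by_cases hx : x ∈ S
    · simp [hψ, hx, this.mp hx, hφ x y hxy]
    · have hy : y ∉ S := fun h => hx (this.mpr h)
      simp [hψ, hx, hy]
  have hsupp : ∀ x, ψ x ≠ 0 → x ∈ S := by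
    intro x hx
    by_contra h
    exact hx (by simp [hψ, h])
  have hfib : ∀ c, MeasurableSet (ψ ⁻¹' {c}) := by
    intro c
    by_cases hc : c = 0
    · have : MeasurableSet ((ψ ⁻¹' {c})ᶜ) := by
        apply vdc_meas_finite
        · apply hfin.subset
          intro x hx
          apply hsupp x
          simpa [hc] using hx
        · intro x y hxy hx
          simpa [← hψi x y hxy] using hx
      simpa using this.compl
    · apply vdc_meas_finite
      · apply hfin.subset
        intro x hx
        apply hsupp x
        have : ψ x = c := hx
        rwa [this]
      · intro x y hxy hx
        simpa [← hψi x y hxy] using hx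
  have hrange : (Set.range ψ).Finite := by
    apply ((hfin.image φ).insert 0).subset
    rintro _ ⟨x, rfl⟩
    by_cases hx : x ∈ S
    · right; exact ⟨x, hx, by simp [hψ, hx]⟩
    · left; simp [hψ, hx]
  have hsm : StronglyMeasurable ψ := by
    let s : SimpleFunc G E := ⟨ψ, hfib, hrange⟩
    exact s.stronglyMeasurable
  have hμ : (Measure.count : Measure G).restrict S = ∑ a ∈ F, Measure.dirac a := by
    ext t ht
    rw [Measure.restrict_apply ht, Measure.count_apply (ht.inter hS), Measure.finsetSum_apply]
    simp_rw [Measure.dirac_apply' _ ht]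
    have : t ∩ S = ((F.filter (· ∈ t) : Finset G) : Set G) := by
      ext x
      simp [← hF, and_comm]
    rw [this, Set.encard_coe_eq_coe_finsetCard, Finset.card_filter]
    simp [Set.indicator_apply]
  have h1 : ∫ g in S, φ g ∂Measure.count = ∫ g in S, ψ g ∂Measure.count := by
    apply setIntegral_congr_fun hS
    intro x hx
    simp [hψ, hx]
  rw [h1, hμ, integral_finsetSum_measure]
  · apply Finset.sum_congr rfl
    intro a ha
    rw [integral_dirac' _ _ hsm]
    have : a ∈ S := by rw [← hF]; exact ha
    simp [hψ, this]
  · intro a ha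
    exact integrable_dirac' hsm (by simp)

lemma vdc_folner {G H : Type*} [Group G] [NormedAddCommGroup H] [DecidableEq G]
    (A B : Finset G) (φ : G → H) (C : ℝ) (hφ : ∀ g, ‖φ g‖ ≤ C) :
    ‖∑ g ∈ A, φ g - ∑ g ∈ B, φ g‖ ≤ C * (symmDiff A B).card := by
  rw [← Finset.sum_sdiff_sub_sum_sdiff]
  have h1 : ∀ D : Finset G, ‖∑ g ∈ D, φ g‖ ≤ D.card * C := by
    intro D
    calc _ ≤ ∑ g ∈ D, ‖φ g‖ := norm_sum_le _ _
      _ ≤ _ := by simpa using Finset.sum_le_card_nsmul D _ C (fun x _ => hφ x)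
  have h2 : (symmDiff A B).card = (A \ B).card + (B \ A).card := by
    rw [symmDiff_def, Finset.sup_eq_union, Finset.card_union_of_disjoint disjoint_sdiff_sdiff]
  rw [h2]
  push_cast
  refine (norm_sub_le _ _).trans ?_
  linarith [h1 (A \ B), h1 (B \ A)]

lemma vdc_core_s7 {G H : Type*} [Group G] [NormedAddCommGroup H] [InnerProductSpace ℂ H]
    (F E : Finset G) (hF : F.Nonempty) (hE : E.Nonempty) (f : G → H) (γ : G → ℂ) (g₁ : G)
    (δ η : ℝ) (hcomm : ∀ h ∈ E, h * g₁ = g₁ * h)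
    (hfol : ∀ h ∈ E, ‖∑ g ∈ F, f (g * g₁) - ∑ g ∈ F, f (g * h * g₁)‖ ≤ δ * F.card)
    (hcor : ∀ h₁ ∈ E, ∀ h₂ ∈ E, ‖(F.card : ℝ)⁻¹ • ∑ g ∈ F,
      (inner ℂ (f (g * (h₁ * g₁))) (f (g * (h₁ * g₁) * (h₁⁻¹ * h₂))) : ℂ) - γ (h₁⁻¹ * h₂)‖ ≤ η)
    (hγ : ‖((E.card : ℝ) ^ 2)⁻¹ • ∑ h₁ ∈ E, ∑ h₂ ∈ E, γ (h₁⁻¹ * h₂)‖ ≤ η) :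
    ‖(F.card : ℝ)⁻¹ • ∑ g ∈ F, f (g * g₁)‖ ≤ δ + √(2 * η) := by
  have hN : (0 : ℝ) < F.card := by exact_mod_cast hF.card_pos
  have hM : (0 : ℝ) < E.card := by exact_mod_cast hE.card_pos
  set N : ℝ := (F.card : ℝ) with hNd
  set M : ℝ := (E.card : ℝ) with hMd
  set S := ∑ g ∈ F, f (g * g₁)
  set v : G → H := fun g => ∑ h ∈ E, f (g * h * g₁) with hv
  -- first error
  have e1 : ‖M • S - ∑ g ∈ F, v g‖ ≤ M * (δ * N) := by
    have : M • S - ∑ g ∈ F, v g = ∑ h ∈ E, (S - ∑ g ∈ F, f (g * h * g₁)) := by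
      rw [Finset.sum_sub_distrib, Finset.sum_const, hv, Finset.sum_comm]
      simp [M, Nat.cast_smul_eq_nsmul]
    rw [this]
    refine (norm_sum_le _ _).trans ?_
    simpa [M] using Finset.sum_le_card_nsmul E _ _ hfol
  -- Cauchy-Schwarz
  have e2 : ‖∑ g ∈ F, v g‖ ^ 2 ≤ N * ∑ g ∈ F, ‖v g‖ ^ 2 := by
    calc _ ≤ (∑ g ∈ F, ‖v g‖) ^ 2 := by gcongr; exact norm_sum_le _ _
      _ ≤ _ := sq_sum_le_card_mul_sum_sq
  -- expansion
  have e3 : ((∑ g ∈ F, ‖v g‖ ^ 2 : ℝ) : ℂ) = ∑ h₁ ∈ E, ∑ h₂ ∈ E, ∑ g ∈ F,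
      (inner ℂ (f (g * (h₁ * g₁))) (f (g * (h₁ * g₁) * (h₁⁻¹ * h₂))) : ℂ) := by
    push_cast
    have : ∀ g ∈ F, ((‖v g‖ : ℂ)) ^ 2 = ∑ h₁ ∈ E, ∑ h₂ ∈ E,
      (inner ℂ (f (g * (h₁ * g₁))) (f (g * (h₁ * g₁) * (h₁⁻¹ * h₂))) : ℂ) := by
      intro g _
      have h0 : ((‖v g‖ : ℂ)) ^ 2 = inner ℂ (v g) (v g) := (inner_self_eq_norm_sq_to_K (𝕜 := ℂ) (v g)).symm
      rw [h0, hv]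
      simp only []
      rw [sum_inner]
      refine Finset.sum_congr rfl fun a ha => ?_
      rw [inner_sum]
      refine Finset.sum_congr rfl fun b hb => ?_
      have h1 : g * b * g₁ = g * (a * g₁) * (a⁻¹ * b) := by
        rw [hcomm a ha, mul_assoc g b, hcomm b hb]
        group
      rw [h1, mul_assoc g a]
    rw [Finset.sum_congr rfl this, Finset.sum_comm]
    refine Finset.sum_congr rfl fun a ha => ?_
    rw [Finset.sum_comm]
  have e4 : ∑ g ∈ F, ‖v g‖ ^ 2 ≤ N * M ^ 2 * (2 * η) := by
    set T : ℂ := ∑ h₁ ∈ E, ∑ h₂ ∈ E, γ (h₁⁻¹ * h₂)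
    have hT : ‖T‖ ≤ M ^ 2 * η := by
      rw [norm_smul, norm_inv, Real.norm_of_nonneg (by positivity),
        inv_mul_le_iff₀ (by positivity)] at hγ
      exact hγ
    have hd : ‖((∑ g ∈ F, ‖v g‖ ^ 2 : ℝ) : ℂ) - N • T‖ ≤ M * (M * (N * η)) := by
      rw [e3, Finset.smul_sum, ← Finset.sum_sub_distrib]
      refine (norm_sum_le _ _).trans ?_
      rw [show M * (M * (N * η)) = E.card • (M * (N * η)) by simp [M]]
      refine Finset.sum_le_card_nsmul E _ _ fun a ha => ?_
      rw [Finset.smul_sum, ← Finset.sum_sub_distrib]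
      refine (norm_sum_le _ _).trans ?_
      rw [show (M * (N * η)) = E.card • (N * η) by simp [M]]
      refine Finset.sum_le_card_nsmul E _ _ fun b hb => ?_
      have := hcor a ha b hb
      set X := ∑ g ∈ F,
        (inner ℂ (f (g * (a * g₁))) (f (g * (a * g₁) * (a⁻¹ * b))) : ℂ)
      have hX : X - N • γ (a⁻¹ * b) = N • (N⁻¹ • X - γ (a⁻¹ * b)) := by
        rw [smul_sub, smul_inv_smul₀ hN.ne']
      rw [hX, norm_smul, Real.norm_of_nonneg hN.le]
      gcongr
    have hn : ‖((∑ g ∈ F, ‖v g‖ ^ 2 : ℝ) : ℂ)‖ = ∑ g ∈ F, ‖v g‖ ^ 2 := by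
      rw [Complex.norm_real, Real.norm_of_nonneg (by positivity)]
    have h5 := norm_le_norm_add_norm_sub' ((∑ g ∈ F, ‖v g‖ ^ 2 : ℝ) : ℂ) (N • T)
    rw [hn, norm_smul, Real.norm_of_nonneg hN.le] at h5
    have h6 : N * ‖T‖ ≤ N * (M ^ 2 * η) := by gcongr
    nlinarith
  have e5 : ‖∑ g ∈ F, v g‖ ≤ N * M * √(2 * η) := by
    have hη : 0 ≤ η := (norm_nonneg _).trans hγ
    refine (sq_le_sq₀ (norm_nonneg _) (by positivity)).mp ?_
    rw [mul_pow, Real.sq_sqrt (by positivity)]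
    nlinarith [mul_le_mul_of_nonneg_left e4 hN.le]
  have e6 : M * ‖S‖ ≤ M * (N * (δ + √(2 * η))) := by
    have := norm_le_norm_add_norm_sub' (M • S) (∑ g ∈ F, v g)
    rw [norm_smul, Real.norm_of_nonneg hM.le] at this
    nlinarith
  rw [norm_smul, norm_inv, Real.norm_of_nonneg hN.le, inv_mul_le_iff₀ hN]
  exact le_of_mul_le_mul_left e6 hM

/-- **Lemma 5.1(2), the uniform "van der Corput" lemma.**  Let `G'` be a second countable
topological group whose counting measure on the Borel σ-algebra is right invariant, `K` a
Borel measurable abelian subsemigroup of `G'` and `(Λ n)` a uniform Følner sequence in `K`.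
Let `H` be a Hilbert space and `f : G' → H` bounded and weakly Borel measurable with
`⟨f(·), f(·)⟩` Borel measurable.  If `γ h = lim_n (1/μ(Λ n)) Σ_{g ∈ Λ n} ⟨f(g), f(gh)⟩`
exists for all `h`, `lim_m (1/μ(Λ m)²) Σ_{h₁ ∈ Λ m} Σ_{h₂ ∈ Λ m} γ (h₁⁻¹ h₂) = 0`, and
`lim_n sup_{g₁ ∈ K} |(1/μ(Λ n)) Σ_{g ∈ Λ n g₁} ⟨f(g), f(gh)⟩ − γ h| = 0` for all `h`, then
`lim_n sup_{g₁ ∈ K} ‖(1/μ(Λ n)) Σ_{g ∈ Λ n g₁} f(g)‖ = 0`. -/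
theorem uniform_van_der_Corput
    -- a second countable topological group G' with right invariant counting measure
    {G' : Type*} [Group G'] [TopologicalSpace G'] [IsTopologicalGroup G']
    [SecondCountableTopology G'] [MeasurableSpace G'] [BorelSpace G']
    (hRight : ∀ (V : Set G') (g : G'), MeasurableSet V →
      Measure.count (V * {g}) = Measure.count V)
    -- a Borel measurable abelian subsemigroup K of G'
    (K : Set G') (hKmeas : MeasurableSet K) (hKmul : ∀ g ∈ K, ∀ h ∈ K, g * h ∈ K)
    (hKcomm : ∀ g ∈ K, ∀ h ∈ K, g * h = h * g)
    -- a uniform Følner sequence (Λ n) in K (finite and nonempty for n large enough)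
    (Λ : ℕ → Set G') (hΛmeas : ∀ n, MeasurableSet (Λ n) ∧ Λ n ⊆ K)
    (hΛfin : ∀ᶠ n in atTop, 0 < Measure.count (Λ n) ∧ Measure.count (Λ n) < ⊤)
    (hΛfolner : ∀ g ∈ K, Tendsto
      (fun n => (Measure.count (symmDiff (Λ n) (Λ n * {g}))).toReal /
        (Measure.count (Λ n)).toReal) atTop (𝓝 0))
    (hΛunif : ∀ᶠ m in atTop, ∀ ε > (0 : ℝ), ∀ᶠ n in atTop, ∀ g ∈ Λ m,
      (Measure.count (symmDiff (Λ n) (Λ n * {g}))).toReal ≤ ε * (Measure.count (Λ n)).toReal)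
    -- a Hilbert space H and a bounded, weakly measurable function f : G' → H
    {H : Type*} [NormedAddCommGroup H] [InnerProductSpace ℂ H] [CompleteSpace H]
    (f : G' → H) (hbdd : ∃ C : ℝ, ∀ g, ‖f g‖ ≤ C)
    (hweak : ∀ x : H, Measurable fun g => (inner ℂ (f g) x : ℂ))
    (hff : Measurable fun p : G' × G' => (inner ℂ (f p.1) (f p.2) : ℂ))
    -- γ h is the limit of the correlation averages
    (γ : G' → ℂ)
    (hγ : ∀ h : G', Tendsto
      (fun n => (Measure.count (Λ n)).toReal⁻¹ •
        ∫ g in Λ n, (inner ℂ (f g) (f (g * h)) : ℂ) ∂Measure.count)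
      atTop (𝓝 (γ h)))
    -- the van der Corput condition (5.1)
    (hγ0 : Tendsto
      (fun m => ((Measure.count (Λ m)).toReal ^ 2)⁻¹ •
        ∫ h₁ in Λ m, ∫ h₂ in Λ m, γ (h₁⁻¹ * h₂) ∂Measure.count ∂Measure.count)
      atTop (𝓝 0))
    -- the uniform correlation hypothesis (in ε-form)
    (hγunif : ∀ h : G', ∀ ε > (0 : ℝ), ∀ᶠ n in atTop, ∀ g₁ ∈ K,
      ‖(Measure.count (Λ n)).toReal⁻¹ •
          (∫ g in Λ n * {g₁}, (inner ℂ (f g) (f (g * h)) : ℂ) ∂Measure.count) - γ h‖ ≤ ε) :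
    -- conclusion (in ε-form)
    ∀ ε > (0 : ℝ), ∀ᶠ n in atTop, ∀ g₁ ∈ K,
      ‖(Measure.count (Λ n)).toReal⁻¹ • ∫ g in Λ n * {g₁}, f g ∂Measure.count‖ ≤ ε := by
  classical
  -- inseparable points are not distinguished
  have hfi : ∀ x y, Inseparable x y → f x = f y := by
    intro x y hxy
    have h1 : ∀ v : H, (inner ℂ (f x) v : ℂ) = inner ℂ (f y) v := by
      intro v
      have := hxy.mem_measurableSet_iff ((hweak v) (measurableSet_singleton (inner ℂ (f x) v : ℂ)))
      exact (this.mp rfl).symm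
    exact ext_inner_right ℂ h1
  have hmulr : ∀ (g : G') (x y : G'), Inseparable x y → Inseparable (x * g) (y * g) :=
    fun g x y h => h.mul (Inseparable.refl g)
  have hγi : ∀ x y, Inseparable x y → γ x = γ y := by
    intro x y hxy
    refine tendsto_nhds_unique (hγ x) ((hγ y).congr fun n => ?_)
    have : ∀ g, f (g * y) = f (g * x) := fun g => hfi _ _ ((Inseparable.refl g).mul hxy.symm)
    simp_rw [this]
  have hTm : ∀ (S : Set G') (g : G'), MeasurableSet S → MeasurableSet (S * {g}) := by
    intro S g hS
    rw [Set.mul_singleton]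
    exact (Homeomorph.mulRight g).toMeasurableEquiv.measurableSet_image.mpr hS
  -- finset version of the sets
  have hfs : ∀ n, (0 < Measure.count (Λ n) ∧ Measure.count (Λ n) < ⊤) →
      ∃ F : Finset G', (F : Set G') = Λ n ∧ F.Nonempty ∧
        (Measure.count (Λ n)).toReal = F.card := by
    rintro n ⟨h0, h1⟩
    rw [Measure.count_apply (hΛmeas n).1] at h0 h1
    have hfin : (Λ n).Finite := by
      rw [← Set.encard_lt_top_iff]
      simpa using h1
    refine ⟨hfin.toFinset, by simp, ?_, ?_⟩
    · rw [Set.Finite.toFinset_nonempty, Set.nonempty_iff_ne_empty]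
      rintro h
      simp [h] at h0
    · rw [Measure.count_apply (hΛmeas n).1, hfin.encard_eq_coe_toFinset_card]
      simp
  have htr : ∀ (F : Finset G') (S : Set G') (g : G'), (F : Set G') = S →
      ((F.map (mulRightEmbedding g) : Finset G') : Set G') = S * {g} := by
    intro F S g h
    ext x
    simp [← h]
  have hItC : ∀ (n : ℕ) (F : Finset G') (g : G') (φ : G' → ℂ), (F : Set G') = Λ n →
      (∀ x y, Inseparable x y → φ x = φ y) →
      ∫ x in Λ n * {g}, φ x ∂Measure.count = ∑ x ∈ F, φ (x * g) := by
    intro n F g φ hF hφ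
    rw [vdc_integral _ (hTm _ g (hΛmeas n).1) _ (htr F _ g hF) φ hφ, Finset.sum_map]
    rfl
  obtain ⟨C₀, hC₀⟩ := hbdd
  obtain ⟨C, hCpos, hC⟩ : ∃ C : ℝ, 0 < C ∧ ∀ g, ‖f g‖ ≤ C :=
    ⟨max C₀ 1, by positivity, fun g => (hC₀ g).trans (le_max_left _ _)⟩
  intro ε hε
  set η : ℝ := ε ^ 2 / 8 with hη
  have hηpos : 0 < η := by positivity
  -- choose m
  have hev : ∀ᶠ m in atTop, ‖((Measure.count (Λ m)).toReal ^ 2)⁻¹ •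
        ∫ h₁ in Λ m, ∫ h₂ in Λ m, γ (h₁⁻¹ * h₂) ∂Measure.count ∂Measure.count‖ ≤ η := by
    have := hγ0.norm
    rw [norm_zero] at this
    exact this.eventually (Iic_mem_nhds hηpos)
  obtain ⟨m, hm1, hm2, hm3⟩ := (hev.and (hΛfin.and hΛunif)).exists
  obtain ⟨E, hEm, hEne, hEc⟩ := hfs m hm2
  have hEK : ∀ h ∈ E, h ∈ K := fun h hh => (hΛmeas m).2 (by rw [← hEm]; exact hh)
  have hγE : ‖((E.card : ℝ) ^ 2)⁻¹ • ∑ h₁ ∈ E, ∑ h₂ ∈ E, γ (h₁⁻¹ * h₂)‖ ≤ η := by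
    have hin : ∀ h₁, ∫ h₂ in Λ m, γ (h₁⁻¹ * h₂) ∂Measure.count = ∑ h₂ ∈ E, γ (h₁⁻¹ * h₂) :=
      fun h₁ => vdc_integral _ (hΛmeas m).1 E hEm _
        (fun x y hxy => hγi _ _ ((Inseparable.refl _).mul hxy))
    simp_rw [hin] at hm1
    rw [vdc_integral _ (hΛmeas m).1 E hEm (fun h₁ => ∑ h₂ ∈ E, γ (h₁⁻¹ * h₂)) (fun x y hxy => Finset.sum_congr rfl
        fun h₂ _ => hγi _ _ (hxy.inv.mul (Inseparable.refl _))), hEc] at hm1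
    exact hm1
  have hcorr : ∀ᶠ n in atTop, ∀ h₁ ∈ E, ∀ h₂ ∈ E, ∀ g₁ ∈ K,
      ‖(Measure.count (Λ n)).toReal⁻¹ • (∫ g in Λ n * {g₁},
        (inner ℂ (f g) (f (g * (h₁⁻¹ * h₂))) : ℂ) ∂Measure.count) - γ (h₁⁻¹ * h₂)‖ ≤ η := by
    rw [Filter.eventually_all_finset]
    intro h₁ _
    rw [Filter.eventually_all_finset]
    intro h₂ _
    exact hγunif _ η hηpos
  filter_upwards [hcorr, hΛfin, hm3 (ε / 2 / C) (by positivity)] with n hn1 hn2 hn3 g₁ hg₁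
  obtain ⟨F, hFn, hFne, hFc⟩ := hfs n hn2
  rw [vdc_integral _ (hTm _ g₁ (hΛmeas n).1) _ (htr F _ g₁ hFn) f hfi, Finset.sum_map, hFc]
  have key := vdc_core_s7 F E hFne hEne f γ g₁ (ε / 2) η
    (fun h hh => hKcomm h (hEK h hh) g₁ hg₁) ?_ ?_ hγE
  · have hs : √(2 * η) = ε / 2 := by
      rw [hη, show 2 * (ε ^ 2 / 8) = (ε / 2) ^ 2 by ring]
      exact Real.sqrt_sq (by positivity)
    rw [hs, add_halves] at key
    exact key
  · intro h hh
    have h1 := hn3 h (by rw [← hEm]; exact hh)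
    have h2 := vdc_folner F (F.map (mulRightEmbedding h)) (fun x => f (x * g₁)) C
      (fun g => hC _)
    rw [Finset.sum_map] at h2
    have h3 : (Measure.count (symmDiff (Λ n) (Λ n * {h}))).toReal =
        (symmDiff F (F.map (mulRightEmbedding h))).card := by
      rw [Measure.count_apply ((hΛmeas n).1.symmDiff (hTm _ h (hΛmeas n).1)),
        ← htr F _ h hFn, ← hFn, ← Finset.coe_symmDiff, Set.encard_coe_eq_coe_finsetCard]
      simp
    rw [h3, hFc] at h1
    refine h2.trans ?_
    calc _ ≤ C * (ε / 2 / C * F.card) := by gcongr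
      _ = _ := by field_simp
  · intro h₁ hh₁ h₂ hh₂
    have h1 := hn1 h₁ hh₁ h₂ hh₂ (h₁ * g₁) (hKmul _ (hEK _ hh₁) _ hg₁)
    rw [hItC n F _ _ hFn, hFc] at h1
    · exact h1
    · intro x y hxy
      rw [hfi _ _ hxy, hfi _ _ (hmulr _ _ _ hxy)]
end

section
/- (uniform two-parameter van der Corput lemma) Let G be a countable second countable topological group whose counting measure μ on the Borel σ-algebra Σ is right and left invariant, let K ⊆ G be a Borel measurable abelian subsemigroup with uniform Følner sequences (Λ_{1,n}) and (Λ_{2,n}), let H be a Hilbert space, and let f : G² → H be a bounded function such that ⟨f(·), x⟩ is Borel measurable for all x ∈ H and ⟨f(·), f(·)⟩ : G² × G² → ℂ is Borel measurable. Assume γ_{(g',h')} := lim_{n→∞} (1/(μ(Λ_{1,n})μ(Λ_{2,n}))) Σ_{h ∈ Λ_{1,n}} Σ_{g ∈ Λ_{2,n}} ⟨f(g,h), f(gg', hh')⟩ exists for all g', h' ∈ G, that lim_{m→∞} (1/(μ(Λ_{1,m})μ(Λ_{2,m}))) Σ_{h ∈ Λ_{1,m}⁻¹Λ_{1,m}}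 Σ_{g ∈ Λ_{2,m}⁻¹Λ_{2,m}} |γ_{(g,h)}| = 0, and that lim_{n→∞} sup_{g₁,g₂ ∈ K} | (1/(μ(Λ_{1,n})μ(Λ_{2,n}))) Σ_{h ∈ Λ_{1,n}g₁} Σ_{g ∈ Λ_{2,n}g₂} ⟨f(g,h), f(gg', hh')⟩ − γ_{(g',h')} | = 0 for all g', h' ∈ G. Then lim_{n→∞} sup_{g₁,g₂ ∈ K} ‖ (1/(μ(Λ_{1,n})μ(Λ_{2,n}))) Σ_{h ∈ Λ_{1,n}g₁} Σ_{g ∈ Λ_{2,n}g₂} f(g,h) ‖ = 0. -/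
open MeasureTheory Filter Topology
open scoped Pointwise


lemma vdc_shift_s9 {Γ E : Type*} [Group Γ] [DecidableEq Γ] [NormedAddCommGroup E] (F : Finset Γ) (φ : Γ → E) (C : ℝ)
    (hC : ∀ p, ‖φ p‖ ≤ C) (q : Γ) :
    ‖∑ p ∈ F, φ p - ∑ p ∈ F, φ (p * q)‖ ≤ 2 * C * ((F \ F.image (· * q)).card : ℝ) := by
  have hi : ∑ p ∈ F, φ (p * q) = ∑ p ∈ F.image (· * q), φ p := by
    rw [Finset.sum_image]
    intro a _ b _ h
    exact mul_right_cancel h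
  have hcard : (F.image (· * q)).card = F.card :=
    Finset.card_image_of_injective _ (mul_left_injective q)
  have hc2 := Finset.card_sdiff_comm hcard
  rw [hi, ← Finset.sum_sdiff_sub_sum_sdiff]
  have h1 := norm_sum_le_of_le (F \ F.image (· * q)) (fun p _ => hC p)
  have h2 := norm_sum_le_of_le (F.image (· * q) \ F) (fun p _ => hC p)
  rw [Finset.sum_const, nsmul_eq_mul] at h1 h2
  rw [hc2] at h2
  refine (norm_sub_le _ _).trans ?_
  linarith

lemma vdc_normsq {Γ H : Type*} [NormedAddCommGroup H] [InnerProductSpace ℂ H]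
    (F Q : Finset Γ) (v : Γ → Γ → H) :
    ‖∑ p ∈ F, ∑ q ∈ Q, v p q‖ ^ 2 ≤
      F.card * ∑ q ∈ Q, ∑ q' ∈ Q, ‖∑ p ∈ F, (inner ℂ (v p q) (v p q') : ℂ)‖ := by
  have h1 : ‖∑ p ∈ F, ∑ q ∈ Q, v p q‖ ^ 2 ≤ F.card * ∑ p ∈ F, ‖∑ q ∈ Q, v p q‖ ^ 2 :=
    (pow_le_pow_left₀ (norm_nonneg _) (norm_sum_le _ _) 2).trans sq_sum_le_card_mul_sum_sq
  refine h1.trans (mul_le_mul_of_nonneg_left ?_ (Nat.cast_nonneg _))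
  have h2 : ((∑ p ∈ F, ‖∑ q ∈ Q, v p q‖ ^ 2 : ℝ) : ℂ)
      = ∑ q ∈ Q, ∑ q' ∈ Q, ∑ p ∈ F, (inner ℂ (v p q) (v p q') : ℂ) := by
    have : ∀ p, ((‖∑ q ∈ Q, v p q‖ ^ 2 : ℝ) : ℂ)
        = ∑ q ∈ Q, ∑ q' ∈ Q, (inner ℂ (v p q) (v p q') : ℂ) := by
      intro p
      have := inner_self_eq_norm_sq_to_K (𝕜 := ℂ) (∑ q ∈ Q, v p q)
      rw [sum_inner] at this
      simp_rw [inner_sum] at this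
      rw [this]; simp
    rw [Complex.ofReal_sum]
    simp_rw [this]
    rw [Finset.sum_comm]
    refine Finset.sum_congr rfl fun q _ => ?_
    rw [Finset.sum_comm]
  have h3 : (∑ p ∈ F, ‖∑ q ∈ Q, v p q‖ ^ 2 : ℝ) = ‖((∑ p ∈ F, ‖∑ q ∈ Q, v p q‖ ^ 2 : ℝ) : ℂ)‖ := by
    rw [Complex.norm_real, Real.norm_of_nonneg]
    positivity
  rw [h3, h2]
  refine (norm_sum_le _ _).trans (Finset.sum_le_sum fun q _ => norm_sum_le _ _)

lemma vdc_one {Γ H : Type*} [Group Γ] [DecidableEq Γ] [NormedAddCommGroup H] [InnerProductSpace ℂ H]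
    (K : Set Γ) (hKmul : ∀ g ∈ K, ∀ h ∈ K, g * h ∈ K) (hKcomm : ∀ g ∈ K, ∀ h ∈ K, g * h = h * g)
    (F : ℕ → Finset Γ)
    (hfol : ∀ k ∈ K, ∀ ε > (0 : ℝ), ∀ᶠ n in atTop,
      (((F n) \ (F n).image (· * k)).card : ℝ) ≤ ε * (F n).card)
    (f : Γ → H) (C : ℝ) (hC : ∀ p, ‖f p‖ ≤ C) (γ : Γ → ℂ)
    (hγ0 : ∀ ε > (0 : ℝ), ∃ Q : Finset Γ, Q.Nonempty ∧ (∀ q ∈ Q, q ∈ K) ∧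
      ∑ k ∈ Q⁻¹ * Q, ‖γ k‖ ≤ ε * Q.card)
    (hγunif : ∀ k : Γ, ∀ ε > (0 : ℝ), ∀ᶠ n in atTop, ∀ c ∈ K,
      ‖((F n).card : ℝ)⁻¹ • (∑ p ∈ F n, (inner ℂ (f (p * c)) (f (p * c * k)) : ℂ)) - γ k‖ ≤ ε) :
    ∀ ε > (0 : ℝ), ∀ᶠ n in atTop, ∀ c ∈ K, ‖((F n).card : ℝ)⁻¹ • ∑ p ∈ F n, f (p * c)‖ ≤ ε := by
  intro ε hε
  have hC0 : 0 ≤ C := (norm_nonneg _).trans (hC 1)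
  obtain ⟨Q, hQne, hQK, hQ⟩ := hγ0 (ε ^ 2 / 8) (by positivity)
  have hE1 : ∀ᶠ n in atTop, ∀ q ∈ Q,
      (((F n) \ (F n).image (· * q)).card : ℝ) ≤ ε / (4 * (C + 1)) * (F n).card :=
    (Filter.eventually_all_finset Q).2 fun q hq => hfol q (hQK q hq) _ (by positivity)
  have hE2 : ∀ᶠ n in atTop, ∀ k ∈ Q⁻¹ * Q, ∀ c ∈ K,
      ‖((F n).card : ℝ)⁻¹ • (∑ p ∈ F n, (inner ℂ (f (p * c)) (f (p * c * k)) : ℂ)) - γ k‖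
        ≤ ε ^ 2 / 8 :=
    (Filter.eventually_all_finset (Q⁻¹ * Q)).2 fun k _ => hγunif k _ (by positivity)
  filter_upwards [hE1, hE2] with n h1 h2 c hc
  rcases (F n).eq_empty_or_nonempty with he | hne
  · simp [he]; exact hε.le
  have hN : (0 : ℝ) < (F n).card := by exact_mod_cast hne.card_pos
  have hM : (0 : ℝ) < Q.card := by exact_mod_cast hQne.card_pos
  set N : ℝ := ((F n).card : ℝ) with hNdef
  set M : ℝ := (Q.card : ℝ) with hMdef
  -- correlations
  have h3 : ∀ q ∈ Q, ∀ q' ∈ Q,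
      ‖∑ p ∈ F n, (inner ℂ (f (p * (c * q))) (f (p * (c * q'))) : ℂ)‖
        ≤ N * (‖γ (q⁻¹ * q')‖ + ε ^ 2 / 8) := by
    intro q hq q' hq'
    have hk := h2 (q⁻¹ * q') (Finset.mul_mem_mul (Finset.inv_mem_inv hq) hq') (c * q)
      (hKmul c hc q (hQK q hq))
    have e : ∀ p : Γ, p * (c * q) * (q⁻¹ * q') = p * (c * q') := fun p => by group
    simp_rw [e] at hk
    set z := ∑ p ∈ F n, (inner ℂ (f (p * (c * q))) (f (p * (c * q'))) : ℂ)
    have hz : ‖N⁻¹ • z‖ ≤ ‖γ (q⁻¹ * q')‖ + ε ^ 2 / 8 := by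
      have := norm_sub_norm_le (N⁻¹ • z) (γ (q⁻¹ * q'))
      linarith
    rw [norm_smul, norm_inv, Real.norm_of_nonneg hN.le, inv_mul_le_iff₀ hN] at hz
    exact hz
  have h4 : ∑ q ∈ Q, ∑ q' ∈ Q, ‖γ (q⁻¹ * q')‖ ≤ M * (ε ^ 2 / 8 * M) := by
    have : ∀ q ∈ Q, ∑ q' ∈ Q, ‖γ (q⁻¹ * q')‖ ≤ ε ^ 2 / 8 * M := by
      intro q hq
      refine le_trans ?_ hQ
      rw [← Finset.sum_image (s := Q) (g := fun q' => q⁻¹ * q') (f := fun k => ‖γ k‖)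
        (fun a _ b _ h => mul_left_cancel h)]
      refine Finset.sum_le_sum_of_subset_of_nonneg ?_ (fun _ _ _ => norm_nonneg _)
      intro k hk
      obtain ⟨q', hq', rfl⟩ := Finset.mem_image.1 hk
      exact Finset.mul_mem_mul (Finset.inv_mem_inv hq) hq'
    calc _ ≤ ∑ q ∈ Q, ε ^ 2 / 8 * M := Finset.sum_le_sum this
      _ = _ := by rw [Finset.sum_const, nsmul_eq_mul]
  have h5 : ‖∑ p ∈ F n, ∑ q ∈ Q, f (p * (c * q))‖ ^ 2 ≤ (N * M * (ε / 2)) ^ 2 := by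
    refine (vdc_normsq (F n) Q fun p q => f (p * (c * q))).trans ?_
    have : ∑ q ∈ Q, ∑ q' ∈ Q, ‖∑ p ∈ F n, (inner ℂ (f (p * (c * q))) (f (p * (c * q'))) : ℂ)‖
        ≤ ∑ q ∈ Q, ∑ q' ∈ Q, N * (‖γ (q⁻¹ * q')‖ + ε ^ 2 / 8) :=
      Finset.sum_le_sum fun q hq => Finset.sum_le_sum fun q' hq' => h3 q hq q' hq'
    have e : ∑ q ∈ Q, ∑ q' ∈ Q, N * (‖γ (q⁻¹ * q')‖ + ε ^ 2 / 8)
        = N * (∑ q ∈ Q, ∑ q' ∈ Q, ‖γ (q⁻¹ * q')‖ + M * (M * (ε ^ 2 / 8))) := by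
      simp_rw [← Finset.mul_sum, Finset.sum_add_distrib, Finset.sum_const, nsmul_eq_mul]
      rfl
    rw [e] at this
    calc _ ≤ N * (N * (M * (ε ^ 2 / 8 * M) + M * (M * (ε ^ 2 / 8)))) := by
          refine mul_le_mul_of_nonneg_left (this.trans ?_) hN.le
          gcongr
      _ = _ := by ring
  have h6 := le_of_sq_le_sq h5 (by positivity)
  have h7 : ‖∑ q ∈ Q, (∑ p ∈ F n, f (p * c) - ∑ p ∈ F n, f (p * (c * q)))‖
      ≤ M * (N * (ε / 2)) := by
    have : ∀ q ∈ Q, ‖∑ p ∈ F n, f (p * c) - ∑ p ∈ F n, f (p * (c * q))‖ ≤ N * (ε / 2) := by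
      intro q hq
      have hs := vdc_shift_s9 (F n) (fun p => f (p * c)) C (fun p => hC _) q
      have e : ∀ p : Γ, p * q * c = p * (c * q) := fun p => by
        rw [mul_assoc, hKcomm q (hQK q hq) c hc]
      simp_rw [e] at hs
      refine hs.trans ?_
      calc _ ≤ 2 * C * (ε / (4 * (C + 1)) * N) := by gcongr; exact h1 q hq
        _ = N * (ε / 2) * (C / (C + 1)) := by field_simp; ring
        _ ≤ N * (ε / 2) * 1 := by
          gcongr
          rw [div_le_one (by positivity)]; linarith
        _ = _ := mul_one _
    calc _ ≤ ∑ q ∈ Q, N * (ε / 2) := norm_sum_le_of_le _ this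
      _ = _ := by rw [Finset.sum_const, nsmul_eq_mul]
  rw [Finset.sum_sub_distrib, Finset.sum_const, Finset.sum_comm (s := Q)] at h7
  have h8 : ‖Q.card • ∑ p ∈ F n, f (p * c)‖ = M * ‖∑ p ∈ F n, f (p * c)‖ := by
    rw [← Nat.cast_smul_eq_nsmul ℝ, norm_smul, Real.norm_of_nonneg hM.le]
  have h9 : M * ‖∑ p ∈ F n, f (p * c)‖ ≤ M * (N * ε) := by
    rw [← h8]
    have := norm_sub_norm_le (Q.card • ∑ p ∈ F n, f (p * c)) (∑ p ∈ F n, ∑ q ∈ Q, f (p * (c * q)))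
    nlinarith
  have h10 := le_of_mul_le_mul_left h9 hM
  rw [norm_smul, norm_inv, Real.norm_of_nonneg hN.le, inv_mul_le_iff₀ hN]
  exact h10

lemma vdc_measSet {G : Type*} [Countable G] [TopologicalSpace G] [R0Space G]
    [MeasurableSpace G] [BorelSpace G] (S : Set G)
    (hS : ∀ x y, Inseparable x y → x ∈ S → y ∈ S) : MeasurableSet S := by
  have : S = ⋃ x ∈ S, closure {x} := by
    ext y
    simp only [Set.mem_iUnion, exists_prop]
    constructor
    · intro hy
      exact ⟨y, hy, subset_closure rfl⟩
    · rintro ⟨x, hx, hxy⟩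
      exact hS x y (specializes_iff_inseparable.1 (specializes_iff_mem_closure.2 hxy)) hx
  rw [this]
  exact MeasurableSet.biUnion (Set.to_countable S) fun x _ => isClosed_closure.measurableSet

lemma vdc_int {G : Type*} [Countable G] [TopologicalSpace G] [R0Space G]
    [MeasurableSpace G] [BorelSpace G] {E : Type*} [NormedAddCommGroup E] [NormedSpace ℝ E]
    [CompleteSpace E] (S : Finset G) (hS : MeasurableSet (S : Set G)) (φ : G → E)
    (hφ : ∀ x y, Inseparable x y → φ x = φ y) :
    ∫ x in (S : Set G), φ x ∂Measure.count = ∑ x ∈ S, φ x := by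
  borelize E
  have hm : Measurable φ := fun A _ => vdc_measSet _ fun x y h hx => by
    simpa only [Set.mem_preimage, ← hφ x y h] using hx
  have hsm : StronglyMeasurable φ :=
    stronglyMeasurable_iff_measurable_separable.2 ⟨hm, (Set.countable_range φ).isSeparable⟩
  have hμ : Measure.count.restrict (S : Set G) = ∑ x ∈ S, Measure.dirac x := by
    classical
    ext t ht
    rw [Measure.restrict_apply ht, Measure.count_apply (ht.inter hS), Measure.finsetSum_apply]
    simp_rw [Measure.dirac_apply' _ ht]
    rw [show t ∩ (S : Set G) = ((S.filter (· ∈ t) : Finset G) : Set G) by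
      ext; simp [and_comm], Set.encard_coe_eq_coe_finsetCard]
    simp [Set.indicator_apply]
  rw [hμ, integral_finsetSum_measure]
  · exact Finset.sum_congr rfl fun x _ => integral_dirac' _ _ hsm
  · intro x _
    refine ⟨hsm.aestronglyMeasurable, ?_⟩
    rw [HasFiniteIntegral, lintegral_dirac' _ hsm.enorm]
    exact enorm_lt_top

lemma vdc_int2 {G : Type*} [Group G] [Countable G] [TopologicalSpace G] [IsTopologicalGroup G]
    [MeasurableSpace G] [BorelSpace G] {E : Type*} [NormedAddCommGroup E] [NormedSpace ℝ E]
    [CompleteSpace E] (A B : Finset G) (hA : MeasurableSet (A : Set G))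
    (hB : MeasurableSet (B : Set G)) (φ : G × G → E)
    (hφ : ∀ x y x' y', Inseparable x x' → Inseparable y y' → φ (x, y) = φ (x', y')) :
    ∫ h in (A : Set G), ∫ g in (B : Set G), φ (g, h) ∂Measure.count ∂Measure.count
      = ∑ p ∈ B ×ˢ A, φ p := by
  have h1 : ∀ h, ∫ g in (B : Set G), φ (g, h) ∂Measure.count = ∑ g ∈ B, φ (g, h) := fun h =>
    vdc_int B hB _ fun x y hxy => hφ _ _ _ _ hxy (Inseparable.refl _)
  simp_rw [h1]
  rw [vdc_int A hA (fun h => ∑ g ∈ B, φ (g, h)) fun x y hxy => Finset.sum_congr rfl fun g _ =>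
    hφ _ _ _ _ (Inseparable.refl _) hxy]
  rw [Finset.sum_product_right]

lemma vdc_measMul {G : Type*} [Group G] [TopologicalSpace G] [IsTopologicalGroup G]
    [MeasurableSpace G] [BorelSpace G] (A : Set G) (hA : MeasurableSet A) (g : G) :
    MeasurableSet (A * {g}) := by
  have : A * {g} = (fun x => x * g⁻¹) ⁻¹' A := by
    ext x; simp
  rw [this]
  exact (continuous_mul_const g⁻¹).measurable hA

lemma vdc_int3 {G : Type*} [Group G] [Countable G] [TopologicalSpace G] [IsTopologicalGroup G]
    [MeasurableSpace G] [BorelSpace G] {E : Type*} [NormedAddCommGroup E] [NormedSpace ℝ E]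
    [CompleteSpace E] (A B : Finset G) (hA : MeasurableSet (A : Set G))
    (hB : MeasurableSet (B : Set G)) (φ : G × G → E)
    (hφ : ∀ x y x' y', Inseparable x x' → Inseparable y y' → φ (x, y) = φ (x', y')) (c : G × G) :
    ∫ h in (A : Set G) * {c.2}, ∫ g in (B : Set G) * {c.1}, φ (g, h) ∂Measure.count ∂Measure.count
      = ∑ p ∈ B ×ˢ A, φ (p * c) := by
  classical
  have e : ∀ (A : Finset G) (g : G), (A : Set G) * {g} = ((A.image (· * g) : Finset G) : Set G) := by
    intro A g
    simp
  have mA := vdc_measMul _ hA c.2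
  have mB := vdc_measMul _ hB c.1
  rw [e] at mA mB ⊢
  rw [e B, vdc_int2 _ _ mA mB φ hφ]
  rw [Finset.sum_product, Finset.sum_product, Finset.sum_image (fun a _ b _ h => mul_right_cancel h)]
  refine Finset.sum_congr rfl fun x _ => ?_
  rw [Finset.sum_image (fun a _ b _ h => mul_right_cancel h)]
  rfl

open Classical in
lemma vdc_folner_s9 {G : Type*} [Group G] [TopologicalSpace G] [IsTopologicalGroup G]
    [MeasurableSpace G] [BorelSpace G] (Λ : ℕ → Set G) (A : ℕ → Finset G) (g : G)
    (hA : ∀ᶠ n in atTop, (A n : Set G) = Λ n ∧ MeasurableSet (Λ n) ∧ (A n).Nonempty)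
    (hf : Tendsto
      (fun n => (Measure.count (symmDiff (Λ n) (Λ n * {g}))).toReal /
        (Measure.count (Λ n)).toReal) atTop (𝓝 0)) (ε : ℝ) (hε : 0 < ε) :
    ∀ᶠ n in atTop, ((A n \ (A n).image (· * g)).card : ℝ) ≤ ε * (A n).card := by
  filter_upwards [hA, hf.eventually_le_const hε] with n ⟨h1, h2, h3⟩ h4
  have m := h2.symmDiff (vdc_measMul _ h2 g)
  rw [← h1] at h2 h4 m
  rw [show (A n : Set G) * {g} = (((A n).image (· * g) : Finset G) : Set G) by simp,
    ← Finset.coe_symmDiff] at h4 m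
  rw [Measure.count_apply_finset' m, Measure.count_apply_finset' h2] at h4
  simp only [ENNReal.toReal_natCast] at h4
  rw [div_le_iff₀ (by exact_mod_cast h3.card_pos)] at h4
  refine le_trans ?_ h4
  exact_mod_cast Finset.card_le_card (by
    intro x hx
    rw [Finset.mem_symmDiff]
    left
    simpa using hx)

open Classical in
lemma vdc_folner_prod {G : Type*} [Group G] (A B : ℕ → Finset G) (a b : G)
    (hA : ∀ ε > (0 : ℝ), ∀ᶠ n in atTop, ((A n \ (A n).image (· * a)).card : ℝ) ≤ ε * (A n).card)
    (hB : ∀ ε > (0 : ℝ), ∀ᶠ n in atTop, ((B n \ (B n).image (· * b)).card : ℝ) ≤ ε * (B n).card)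
    (ε : ℝ) (hε : 0 < ε) :
    ∀ᶠ n in atTop, (((B n ×ˢ A n) \ (B n ×ˢ A n).image (· * (b, a))).card : ℝ)
      ≤ ε * (B n ×ˢ A n).card := by
  filter_upwards [hA (ε / 2) (by positivity), hB (ε / 2) (by positivity)] with n h1 h2
  have hs : (B n ×ˢ A n) \ (B n ×ˢ A n).image (· * (b, a)) ⊆
      (B n \ (B n).image (· * b)) ×ˢ A n ∪ B n ×ˢ (A n \ (A n).image (· * a)) := by
    rintro ⟨x, y⟩ hx
    simp only [Finset.mem_sdiff, Finset.mem_product, Finset.mem_image, Prod.exists, Prod.mk_mul_mk,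
      Prod.mk.injEq, Finset.mem_union] at hx ⊢
    grind
  have hc := (Finset.card_le_card hs).trans (Finset.card_union_le _ _)
  rw [Finset.card_product, Finset.card_product] at hc
  have hc' : (((B n ×ˢ A n) \ (B n ×ˢ A n).image (· * (b, a))).card : ℝ) ≤
      (B n \ (B n).image (· * b)).card * (A n).card
        + (B n).card * (A n \ (A n).image (· * a)).card := by exact_mod_cast hc
  refine hc'.trans ?_
  rw [Finset.card_product]
  push_cast
  have h3 := mul_le_mul_of_nonneg_right h2 (Nat.cast_nonneg (α := ℝ) (A n).card)
  have h4 := mul_le_mul_of_nonneg_left h1 (Nat.cast_nonneg (α := ℝ) (B n).card)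
  linarith

/-- **Corollary 5.2(2), the uniform two-parameter "van der Corput" lemma** (counting
measure case). -/
theorem uniform_two_parameter_van_der_Corput
    -- a countable second countable topological group G whose counting measure on the
    -- Borel σ-algebra is right and left invariant
    {G : Type*} [Group G] [Countable G] [TopologicalSpace G] [IsTopologicalGroup G]
    [SecondCountableTopology G] [MeasurableSpace G] [BorelSpace G]
    (hRight : ∀ (V : Set G) (g : G), MeasurableSet V →
      Measure.count (V * {g}) = Measure.count V)
    (hLeft : ∀ (V : Set G) (g : G), MeasurableSet V →
      Measure.count ({g} * V) = Measure.count V)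
    -- a Borel measurable abelian subsemigroup K of G
    (K : Set G) (hKmeas : MeasurableSet K) (hKmul : ∀ g ∈ K, ∀ h ∈ K, g * h ∈ K)
    (hKcomm : ∀ g ∈ K, ∀ h ∈ K, g * h = h * g)
    -- uniform Følner sequences (Λ1 n) and (Λ2 n) in K
    (Λ1 Λ2 : ℕ → Set G)
    (hΛ1meas : ∀ n, MeasurableSet (Λ1 n) ∧ Λ1 n ⊆ K)
    (hΛ1fin : ∀ᶠ n in atTop, 0 < Measure.count (Λ1 n) ∧ Measure.count (Λ1 n) < ⊤)
    (hΛ1folner : ∀ g ∈ K, Tendsto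
      (fun n => (Measure.count (symmDiff (Λ1 n) (Λ1 n * {g}))).toReal /
        (Measure.count (Λ1 n)).toReal) atTop (𝓝 0))
    (hΛ1unif : ∀ᶠ m in atTop, ∀ ε > (0 : ℝ), ∀ᶠ n in atTop, ∀ g ∈ Λ1 m,
      (Measure.count (symmDiff (Λ1 n) (Λ1 n * {g}))).toReal ≤
        ε * (Measure.count (Λ1 n)).toReal)
    (hΛ2meas : ∀ n, MeasurableSet (Λ2 n) ∧ Λ2 n ⊆ K)
    (hΛ2fin : ∀ᶠ n in atTop, 0 < Measure.count (Λ2 n) ∧ Measure.count (Λ2 n) < ⊤)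
    (hΛ2folner : ∀ g ∈ K, Tendsto
      (fun n => (Measure.count (symmDiff (Λ2 n) (Λ2 n * {g}))).toReal /
        (Measure.count (Λ2 n)).toReal) atTop (𝓝 0))
    (hΛ2unif : ∀ᶠ m in atTop, ∀ ε > (0 : ℝ), ∀ᶠ n in atTop, ∀ g ∈ Λ2 m,
      (Measure.count (symmDiff (Λ2 n) (Λ2 n * {g}))).toReal ≤
        ε * (Measure.count (Λ2 n)).toReal)
    -- a Hilbert space H and a bounded, weakly measurable function f : G² → H
    {H : Type*} [NormedAddCommGroup H] [InnerProductSpace ℂ H] [CompleteSpace H]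
    (f : G × G → H) (hbdd : ∃ C : ℝ, ∀ p, ‖f p‖ ≤ C)
    (hweak : ∀ x : H, Measurable fun p : G × G => (inner ℂ (f p) x : ℂ))
    (hff : Measurable fun q : (G × G) × (G × G) => (inner ℂ (f q.1) (f q.2) : ℂ))
    -- γ (g', h') is the limit of the correlation averages
    (γ : G × G → ℂ)
    (hγ : ∀ g' h' : G, Tendsto
      (fun n => ((Measure.count (Λ1 n)).toReal * (Measure.count (Λ2 n)).toReal)⁻¹ •
        ∫ h in Λ1 n, ∫ g in Λ2 n,
          (inner ℂ (f (g, h)) (f (g * g', h * h')) : ℂ) ∂Measure.count ∂Measure.count)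
      atTop (𝓝 (γ (g', h'))))
    -- the van der Corput condition (5.4)
    (hγ0 : Tendsto
      (fun m => ((Measure.count (Λ1 m)).toReal * (Measure.count (Λ2 m)).toReal)⁻¹ *
        ∫ h in (Λ1 m)⁻¹ * Λ1 m, ∫ g in (Λ2 m)⁻¹ * Λ2 m,
          ‖γ (g, h)‖ ∂Measure.count ∂Measure.count)
      atTop (𝓝 0))
    -- the uniform correlation hypothesis (in ε-form)
    (hγunif : ∀ g' h' : G, ∀ ε > (0 : ℝ), ∀ᶠ n in atTop, ∀ g₁ ∈ K, ∀ g₂ ∈ K,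
      ‖((Measure.count (Λ1 n)).toReal * (Measure.count (Λ2 n)).toReal)⁻¹ •
          (∫ h in Λ1 n * {g₁}, ∫ g in Λ2 n * {g₂},
            (inner ℂ (f (g, h)) (f (g * g', h * h')) : ℂ) ∂Measure.count ∂Measure.count)
        - γ (g', h')‖ ≤ ε) :
    -- conclusion (in ε-form)
    ∀ ε > (0 : ℝ), ∀ᶠ n in atTop, ∀ g₁ ∈ K, ∀ g₂ ∈ K,
      ‖((Measure.count (Λ1 n)).toReal * (Measure.count (Λ2 n)).toReal)⁻¹ •
          ∫ h in Λ1 n * {g₁}, ∫ g in Λ2 n * {g₂},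
            f (g, h) ∂Measure.count ∂Measure.count‖ ≤ ε := by
  classical
  obtain ⟨C, hC⟩ := hbdd
  -- `f` is constant on pairs of inseparable points
  have hfs : ∀ x y x' y', Inseparable x x' → Inseparable y y' → f (x, y) = f (x', y') := by
    intro x y x' y' hx hy
    trans f (x', y)
    · refine ext_inner_right ℂ fun v => ?_
      have hm : Measurable fun g : G => (inner ℂ (f (g, y)) v : ℂ) :=
        (hweak v).comp measurable_prodMk_right
      exact ((hx.mem_measurableSet_iff
        (hm (measurableSet_singleton (inner ℂ (f (x', y)) v)))).2 rfl)
    · refine ext_inner_right ℂ fun v => ?_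
      have hm : Measurable fun h : G => (inner ℂ (f (x', h)) v : ℂ) :=
        (hweak v).comp measurable_prodMk_left
      exact ((hy.mem_measurableSet_iff
        (hm (measurableSet_singleton (inner ℂ (f (x', y')) v)))).2 rfl)
  have hfs2 : ∀ k : G × G, ∀ x y x' y', Inseparable x x' → Inseparable y y' →
      (inner ℂ (f (x, y)) (f (x * k.1, y * k.2)) : ℂ)
        = inner ℂ (f (x', y')) (f (x' * k.1, y' * k.2)) := by
    intro k x y x' y' hx hy
    rw [hfs _ _ _ _ hx hy,
      hfs _ _ _ _ (hx.mul (Inseparable.refl k.1)) (hy.mul (Inseparable.refl k.2))]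
  have hγs : ∀ x y x' y', Inseparable x x' → Inseparable y y' → γ (x, y) = γ (x', y') := by
    intro x y x' y' hx hy
    refine tendsto_nhds_unique (hγ x y) ?_
    have h := hγ x' y'
    have e : ∀ g h : G, f (g * x', h * y') = f (g * x, h * y) := fun g h =>
      (hfs _ _ _ _ ((Inseparable.refl g).mul hx) ((Inseparable.refl h).mul hy)).symm
    simp_rw [e] at h
    exact h
  -- finite versions of the Følner sets
  let fin : Set G → Finset G := fun S => if h : S.Finite then h.toFinset else ∅
  have hfin : ∀ Λ : ℕ → Set G, (∀ n, MeasurableSet (Λ n) ∧ Λ n ⊆ K) →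
      (∀ᶠ n in atTop, 0 < Measure.count (Λ n) ∧ Measure.count (Λ n) < ⊤) →
      ∀ᶠ n in atTop, (fin (Λ n) : Set G) = Λ n ∧ MeasurableSet (Λ n) ∧ (fin (Λ n)).Nonempty := by
    intro Λ h1 h2
    filter_upwards [h2] with n hn
    have hf : (Λ n).Finite := (Measure.count_apply_lt_top' (h1 n).1).1 hn.2
    have e : (fin (Λ n) : Set G) = Λ n := by simp [fin, hf]
    refine ⟨e, (h1 n).1, ?_⟩
    rw [← Finset.coe_nonempty, e, ← Measure.count_ne_zero_iff]
    exact hn.1.ne'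
  set A : ℕ → Finset G := fun n => fin (Λ1 n)
  set B : ℕ → Finset G := fun n => fin (Λ2 n)
  have hA : ∀ᶠ n in atTop, (A n : Set G) = Λ1 n ∧ MeasurableSet (Λ1 n) ∧ (A n).Nonempty :=
    hfin Λ1 hΛ1meas hΛ1fin
  have hB : ∀ᶠ n in atTop, (B n : Set G) = Λ2 n ∧ MeasurableSet (Λ2 n) ∧ (B n).Nonempty :=
    hfin Λ2 hΛ2meas hΛ2fin
  have hcard : ∀ n, (A n : Set G) = Λ1 n → MeasurableSet (Λ1 n) → (B n : Set G) = Λ2 n →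
      MeasurableSet (Λ2 n) →
      (Measure.count (Λ1 n)).toReal * (Measure.count (Λ2 n)).toReal
        = ((B n ×ˢ A n).card : ℝ) := by
    intro n h1 h2 h3 h4
    rw [← h1] at h2 ⊢
    rw [← h3] at h4 ⊢
    rw [Measure.count_apply_finset' h2, Measure.count_apply_finset' h4, Finset.card_product]
    simp [mul_comm]
  have key := vdc_one (K ×ˢ K) (fun g hg h hh => ⟨hKmul _ hg.1 _ hh.1, hKmul _ hg.2 _ hh.2⟩)
    (fun g hg h hh => Prod.ext (hKcomm _ hg.1 _ hh.1) (hKcomm _ hg.2 _ hh.2))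
    (fun n => B n ×ˢ A n)
    (fun k hk ε hε => vdc_folner_prod A B k.2 k.1
      (fun ε hε => vdc_folner_s9 Λ1 A k.2 hA (hΛ1folner _ hk.2) ε hε)
      (fun ε hε => vdc_folner_s9 Λ2 B k.1 hB (hΛ2folner _ hk.1) ε hε) ε hε)
    f C hC γ ?_ ?_
  · intro ε hε
    filter_upwards [key ε hε, hA, hB] with n h ⟨a1, a2, a3⟩ ⟨b1, b2, b3⟩ g₁ hg₁ g₂ hg₂
    have h' := h (g₂, g₁) ⟨hg₂, hg₁⟩
    have hI := vdc_int3 (A n) (B n) (a1 ▸ a2) (b1 ▸ b2) f hfs (g₂, g₁)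
    rw [a1, b1] at hI
    rw [hcard n a1 a2 b1 b2, hI]
    exact h'
  · intro ε hε
    obtain ⟨n, h, ⟨a1, a2, a3⟩, ⟨b1, b2, b3⟩⟩ :=
      ((hγ0.eventually_le_const hε).and (hA.and hB)).exists
    refine ⟨B n ×ˢ A n, b3.product a3, ?_, ?_⟩
    · intro q hq
      have hq' := Finset.mem_product.1 hq
      exact ⟨(hΛ2meas n).2 (b1 ▸ Finset.mem_coe.2 hq'.1),
        (hΛ1meas n).2 (a1 ▸ Finset.mem_coe.2 hq'.2)⟩
    · have hms : ∀ S : Finset G, MeasurableSet (S : Set G) →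
          MeasurableSet ((S⁻¹ * S : Finset G) : Set G) := by
        intro S hS
        refine vdc_measSet _ fun x y hxy hx => ?_
        rw [Finset.coe_mul, Set.mem_mul] at hx ⊢
        obtain ⟨s, hs, t, ht, rfl⟩ := hx
        refine ⟨s, hs, s⁻¹ * y, ?_, by group⟩
        have := (Inseparable.refl s⁻¹).mul hxy
        rw [inv_mul_cancel_left] at this
        exact (this.mem_measurableSet_iff hS).1 ht
      have hI := vdc_int2 ((A n)⁻¹ * A n) ((B n)⁻¹ * B n) (hms _ (a1 ▸ a2)) (hms _ (b1 ▸ b2))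
        (fun p => ‖γ p‖) (fun x y x' y' hx hy => by simp only [hγs x y x' y' hx hy])
      rw [Finset.coe_mul, Finset.coe_mul, Finset.coe_inv, Finset.coe_inv, a1, b1] at hI
      rw [hcard n a1 a2 b1 b2, hI] at h
      have hpos : (0 : ℝ) < ((B n ×ˢ A n).card : ℝ) := by
        exact_mod_cast (b3.product a3).card_pos
      rw [inv_mul_le_iff₀ hpos, mul_comm] at h
      refine le_trans (Finset.sum_le_sum_of_subset_of_nonneg ?_ fun _ _ _ => norm_nonneg _) h
      intro k hk
      obtain ⟨s, hs, t, ht, rfl⟩ := Finset.mem_mul.1 hk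
      have hs' := Finset.mem_product.1 (Finset.mem_inv'.1 hs)
      have ht' := Finset.mem_product.1 ht
      exact Finset.mem_product.2 ⟨Finset.mul_mem_mul (Finset.mem_inv'.2 hs'.1) ht'.1,
        Finset.mul_mem_mul (Finset.mem_inv'.2 hs'.2) ht'.2⟩
  · intro k ε hε
    filter_upwards [hγunif k.1 k.2 ε hε, hA, hB] with n h ⟨a1, a2, a3⟩ ⟨b1, b2, b3⟩ c hc
    have h' := h c.2 hc.2 c.1 hc.1
    have hI := vdc_int3 (A n) (B n) (a1 ▸ a2) (b1 ▸ b2)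
      (fun p => (inner ℂ (f p) (f (p.1 * k.1, p.2 * k.2)) : ℂ)) (hfs2 k) c
    rw [a1, b1] at hI
    rw [hcard n a1 a2 b1 b2, hI] at h'
    exact h'
end

section
/- Let (A,ω,τ,G) be an ergodic C*-dynamical system (with K = G a group) with ω tracial, such that the product map p : G × G → G, (g,h) ↦ gh, is measurable and (g,h) ↦ ω(τ_h(a₁) τ_g(a₂) τ_{gh}(a₃) τ_g(a₄) τ_h(a₅)) is (Σ × Σ)-measurable for all a₁,...,a₅ ∈ A. Let (Λ_{1α}) and (Λ_{2α}) be Følner nets in G, indexed by the same directed set, such that (Λ_{1α}⁻¹Λ_{1α}) and (Λ_{2α}⁻¹Λ_{2α}) are also Følner nets in G. Fix a GNS representation of (A,ω) and a, b, c ∈ A with at least one of ι(a), ι(b), ι(c*) in H_v; set x_{g,h} := ι(τ_{gh}(a) τ_g(b) τ_h(c)) and γ_{g',h'} := lim_α (1/(μ(Λ_{1α})μ(Λ_{2α}))) ∫_{Λ_{1α}} ∫_{Λ_{2α}} ⟨x_{g,h}, x_{gg',hh'}⟩ dg dh. If (A,ω,τ,G) is asymptotically abelian with respect to (Λ_{1α}),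 then γ_{g',h'} = ω(a* τ_{g'h'}(a)) ω(b* τ_{g'}(b)) ω(τ_{h'}(c) c*) for all g', h' ∈ G, giving a (Σ × Σ)-measurable map (g,h) ↦ γ_{g,h}, and lim_α (1/(μ(Λ_{1α}⁻¹Λ_{1α})μ(Λ_{2α}⁻¹Λ_{2α}))) ∫_{Λ_{1α}⁻¹Λ_{1α}} ∫_{Λ_{2α}⁻¹Λ_{2α}} |γ_{g,h}| dg dh = 0. -/
open Filter Topology
open scoped Pointwise ComplexOrder

/-- A Følner net in a (sub)semigroup `K` of a measure group `(G, Σ, μ)`. -/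
structure FolnerNetIn {G : Type*} [Group G] [MeasurableSpace G]
    (μ : MeasureTheory.Measure G) (K : Set G) where
  idx : Type
  [pre : Preorder idx]
  [ne : Nonempty idx]
  [dir : IsDirected idx (· ≤ ·)]
  Lam : idx → Set G
  meas : ∀ α, MeasurableSet (Lam α) ∧ Lam α ⊆ K
  fin : ∀ᶠ α in atTop, 0 < μ (Lam α) ∧ μ (Lam α) < ⊤
  folner : ∀ g ∈ K, Tendsto
    (fun α => (μ (symmDiff (Lam α) (Lam α * {g}))).toReal / (μ (Lam α)).toReal)
    atTop (𝓝 0)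

attribute [instance] FolnerNetIn.pre FolnerNetIn.ne FolnerNetIn.dir

open MeasureTheory

/-- Ergodicity of `(A, ω, τ, G)` along a Følner net. -/
def FolnerNetIn.ErgodicAlong
    {A : Type*} [NormedRing A] [StarRing A] [CStarRing A] [NormedAlgebra ℂ A]
    [CompleteSpace A] [StarModule ℂ A]
    {G : Type*} [CommGroup G] [MeasurableSpace G] {μ : Measure G} {K : Set G}
    (F : FolnerNetIn μ K) (ω : A →ₗ[ℂ] ℂ) (τ : G → A ≃⋆ₐ[ℂ] A) : Prop :=
  ∀ a b : A,
    Tendsto (fun α => (μ (F.Lam α)).toReal⁻¹ • ∫ g in F.Lam α, ω (a * τ g b) ∂μ)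
      atTop (𝓝 (ω a * ω b))

/-- The space `H_v` of flight vectors: the orthogonal complement of the closed span `H₀` of
the unimodular eigenvectors of the semigroup `S = {U g : g ∈ G}` of contractions. -/
noncomputable def flightVectors {G H : Type*} [NormedAddCommGroup H]
    [InnerProductSpace ℂ H] (U : G → H →L[ℂ] H) : Submodule ℂ H :=
  ((Submodule.span ℂ {x : H | x ≠ 0 ∧ ∃ lam : G → ℂ,
      ∀ g, ‖lam g‖ = 1 ∧ U g x = lam g • x}).topologicalClosure)ᗮ


/-- A positive operator with bounded finite traces is compact. -/
theorem aux_compact {H : Type*} [NormedAddCommGroup H] [InnerProductSpace ℂ H] [CompleteSpace H]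
    (T : H →L[ℂ] H) (hT : T.IsPositive) (C : ℝ)
    (hC : ∀ (n : ℕ) (e : Fin n → H), Orthonormal ℂ e →
      ∑ i, (inner ℂ (T (e i)) (e i) : ℂ).re ≤ C) : IsCompactOperator T := by
  obtain ⟨S, hS⟩ := CStarAlgebra.nonneg_iff_eq_star_mul_self.1
    ((ContinuousLinearMap.nonneg_iff_isPositive T).2 hT)
  have hS2 : ∀ v, (inner ℂ (T v) v : ℂ).re = ‖S v‖ ^ 2 := by
    intro v
    rw [hS]
    simp only [mul_apply_eq_comp, ContinuousLinearMap.star_eq_adjoint,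
      ContinuousLinearMap.adjoint_inner_left]
    rw [inner_self_eq_norm_sq_to_K]
    norm_cast
  have key : ∀ ε > 0, ∃ F : H →L[ℂ] H, IsCompactOperator F ∧ dist F T ≤ ε := by
    intro ε hε
    set R : Set ℝ := {r | ∃ (n : ℕ) (e : Fin n → H), Orthonormal ℂ e ∧
      r = ∑ i, (inner ℂ (T (e i)) (e i) : ℂ).re} with hR
    have hbdd : BddAbove R := ⟨C, by rintro r ⟨n, e, he, rfl⟩; exact hC n e he⟩
    have hne : R.Nonempty := ⟨0, 0, Fin.elim0, by
      rw [orthonormal_iff_ite]; intro i; exact i.elim0, by simp⟩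
    have hδ : 0 < (ε / (‖S‖ + 1)) ^ 2 := by positivity
    obtain ⟨r, ⟨n, e, he, rfl⟩, hr⟩ := exists_lt_of_lt_csSup hne (sub_lt_self (sSup R) hδ)
    have hsmall : ∀ v : H, ‖v‖ = 1 → (∀ i, (inner ℂ (e i) v : ℂ) = 0) →
        ‖S v‖ ≤ ε / (‖S‖ + 1) := by
      intro v hv hvo
      have ho : Orthonormal ℂ (Fin.cons v e : Fin (n+1) → H) := by
        rw [orthonormal_iff_ite] at he ⊢
        intro i k
        refine Fin.cases ?_ (fun i => ?_) i <;> refine Fin.cases ?_ (fun k => ?_) k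
        · simp [inner_self_eq_norm_sq_to_K, hv]
        · have : (inner ℂ v (e k) : ℂ) = 0 := by rw [← inner_conj_symm, hvo]; simp
          simp [this, (Fin.succ_ne_zero k).symm]
        · simp [hvo]
        · simp [he]
      have h1 : ∑ i, (inner ℂ (T ((Fin.cons v e : Fin (n+1) → H) i))
          ((Fin.cons v e : Fin (n+1) → H) i) : ℂ).re ≤ sSup R :=
        le_csSup hbdd ⟨n+1, _, ho, rfl⟩
      rw [Fin.sum_univ_succ] at h1
      simp only [Fin.cons_zero, Fin.cons_succ] at h1
      rw [hS2 v] at h1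
      exact le_of_sq_le_sq (by linarith) (by positivity)
    let E := Submodule.span ℂ (Set.range e)
    have : FiniteDimensional ℂ E := FiniteDimensional.span_of_finite ℂ (Set.finite_range e)
    refine ⟨T ∘L E.starProjection, ?_, ?_⟩
    · have h0 : IsCompactOperator (E.subtypeL ∘L E.orthogonalProjectionOnto) := by
        have := (isCompactOperator_id_iff_finiteDimensional (𝕜 := ℂ) (E := E)).2 inferInstance
        exact (this.comp_clm E.orthogonalProjectionOnto).clm_comp E.subtypeL
      exact h0.clm_comp T
    · rw [dist_comm, dist_eq_norm]
      refine ContinuousLinearMap.opNorm_le_bound _ hε.le fun w => ?_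
      have hw : (T - T ∘L E.starProjection) w = T (w - E.starProjection w) := by simp
      rw [hw]
      set v := w - E.starProjection w with hv
      have hvo : ∀ i, (inner ℂ (e i) v : ℂ) = 0 := fun i =>
        (Submodule.sub_starProjection_mem_orthogonal w) _ (Submodule.subset_span ⟨i, rfl⟩)
      have hvn : ‖v‖ ≤ ‖w‖ := by
        have : v = Eᗮ.starProjection w := by
          rw [Submodule.starProjection_orthogonal]; simp [hv]
        rw [this]; exact Submodule.norm_starProjection_apply_le _ _
      have hSv : ‖S v‖ ≤ ε / (‖S‖ + 1) * ‖v‖ := by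
        by_cases h0 : v = 0
        · simp [h0]
        have hn : ‖v‖ ≠ 0 := norm_ne_zero_iff.2 h0
        have := hsmall (((‖v‖⁻¹ : ℝ) : ℂ) • v) (by simp [norm_smul, hn])
          (fun i => by rw [inner_smul_right, hvo]; simp)
        rw [map_smul, norm_smul] at this
        simp only [Complex.norm_real, norm_inv, norm_norm] at this
        rwa [inv_mul_le_iff₀ (by positivity), mul_comm] at this
      have hTv : T v = star S (S v) := by rw [hS]; rfl
      calc ‖T v‖ ≤ ‖star S‖ * ‖S v‖ := by rw [hTv]; exact ContinuousLinearMap.le_opNorm _ _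
        _ ≤ ‖S‖ * (ε / (‖S‖ + 1) * ‖v‖) := by rw [norm_star]; gcongr
        _ = (‖S‖ / (‖S‖ + 1)) * (ε * ‖v‖) := by ring
        _ ≤ 1 * (ε * ‖v‖) := by
          gcongr
          rw [div_le_one (by positivity)]; linarith
        _ ≤ ε * ‖w‖ := by rw [one_mul]; gcongr
  have : T ∈ closure {f : H →L[ℂ] H | IsCompactOperator f} := by
    rw [Metric.mem_closure_iff]
    intro ε hε
    obtain ⟨F, hF, hd⟩ := key (ε/2) (by positivity)
    exact ⟨F, hF, by rw [dist_comm]; linarith⟩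
  have hcl : IsClosed {f : H →L[ℂ] H | IsCompactOperator f} := isClosed_setOfPred_isCompactOperator
  rw [hcl.closure_eq] at this
  exact this

/-- A commuting family on a nonzero finite-dimensional invariant space has a joint eigenvector. -/
theorem aux_joint {H G : Type*} [NormedAddCommGroup H] [InnerProductSpace ℂ H]
    (U : G → H →L[ℂ] H) (hcomm : ∀ g h v, U g (U h v) = U h (U g v)) :
    ∀ (n : ℕ) (W : Submodule ℂ H), FiniteDimensional ℂ W → Module.finrank ℂ W = n → W ≠ ⊥ →
      (∀ g, ∀ v ∈ W, U g v ∈ W) →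
      ∃ e ∈ W, e ≠ 0 ∧ ∃ lam : G → ℂ, ∀ g, U g e = lam g • e := by
  intro n
  induction n using Nat.strong_induction_on with
  | _ n ih =>
  intro W hfd hn hW hinv
  by_cases hall : ∀ g, ∃ c : ℂ, ∀ v ∈ W, U g v = c • v
  · choose lam hlam using hall
    obtain ⟨e, heW, he⟩ := Submodule.exists_mem_ne_zero_of_ne_bot hW
    exact ⟨e, heW, he, lam, fun g => hlam g e heW⟩
  · push Not at hall
    obtain ⟨g, hg⟩ := hall
    have : Nontrivial W := (Submodule.nontrivial_iff_ne_bot).2 hW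
    let f : Module.End ℂ W := (U g).toLinearMap.restrict (hinv g)
    obtain ⟨c, hc⟩ := Module.End.exists_eigenvalue f
    obtain ⟨v, hv⟩ := hc.exists_hasEigenvector
    let W' : Submodule ℂ H := W ⊓ LinearMap.ker ((U g).toLinearMap - c • LinearMap.id)
    have hmem : ∀ w, w ∈ W' ↔ w ∈ W ∧ U g w = c • w := by
      intro w; simp [W', sub_eq_zero]
    have hle : W' ≤ W := inf_le_left
    have hlt : W' < W := by
      refine lt_of_le_of_ne hle fun h => ?_
      obtain ⟨w, hw, hne⟩ := hg c
      exact hne ((hmem w).1 (h ▸ hw)).2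
    have hne : W' ≠ ⊥ := by
      rw [Submodule.ne_bot_iff]
      refine ⟨v, (hmem _).2 ⟨v.2, ?_⟩, by simpa using hv.2⟩
      have := hv.apply_eq_smul
      exact congrArg Subtype.val this
    obtain ⟨e, he, h⟩ := ih (Module.finrank ℂ W') (hn ▸ Submodule.finrank_lt_finrank_of_lt hlt) W'
      (Submodule.finiteDimensional_of_le hle) rfl hne (by
        intro k w hw
        rw [hmem] at hw ⊢
        exact ⟨hinv k w hw.1, by rw [hcomm, hw.2, map_smul]⟩)
    exact ⟨e, hle he, h⟩

set_option linter.unusedSectionVars false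

/-- Average over a set. -/
noncomputable def avS {G E : Type*} [MeasurableSpace G] [NormedAddCommGroup E] [NormedSpace ℝ E]
    (μ : Measure G) (Λ : Set G) (f : G → E) : E := (μ Λ).toReal⁻¹ • ∫ g in Λ, f g ∂μ

/-- Følner net along a filter. -/
structure FNet {G ι : Type*} [CommGroup G] [MeasurableSpace G] (μ : Measure G) (l : Filter ι)
    (Λ : ι → Set G) : Prop where
  meas : ∀ᶠ α in l, MeasurableSet (Λ α)
  fin : ∀ᶠ α in l, 0 < μ (Λ α) ∧ μ (Λ α) < ⊤
  fol : ∀ g : G, Tendsto (fun α => (μ (symmDiff (Λ α) (Λ α * {g}))).toReal / (μ (Λ α)).toReal)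
    l (𝓝 0)

theorem FNet.mono {G ι : Type*} [CommGroup G] [MeasurableSpace G] {μ : Measure G} {l l' : Filter ι}
    {Λ : ι → Set G} (F : FNet μ l Λ) (h : l' ≤ l) : FNet μ l' Λ :=
  ⟨h F.meas, h F.fin, fun g => (F.fol g).mono_left h⟩

section avg
variable {G E : Type*} [MeasurableSpace G] [NormedAddCommGroup E] [NormedSpace ℝ E]
    {μ : Measure G} {Λ : Set G}

theorem bdd_integrableOn (hΛ : μ Λ < ⊤) {f : G → E} (hf : StronglyMeasurable f) {K : ℝ}
    (hK : ∀ g, ‖f g‖ ≤ K) : IntegrableOn f Λ μ := by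
  have : IsFiniteMeasure (μ.restrict Λ) := ⟨by simpa using hΛ⟩
  exact Integrable.of_bound hf.aestronglyMeasurable K (Eventually.of_forall hK)

theorem avS_norm_le (hΛ : μ Λ < ⊤) {f : G → E} {K : ℝ} (hK0 : 0 ≤ K)
    (hK : ∀ g ∈ Λ, ‖f g‖ ≤ K) : ‖avS μ Λ f‖ ≤ K := by
  have h := norm_setIntegral_le_of_norm_le_const hΛ hK
  unfold avS
  rw [norm_smul, norm_inv, Real.norm_of_nonneg ENNReal.toReal_nonneg]
  rcases eq_or_lt_of_le (ENNReal.toReal_nonneg (a := μ Λ)) with h0 | h0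
  · rw [← h0]; simpa using hK0
  · rw [inv_mul_le_iff₀ h0, mul_comm]; exact h

theorem avS_add {f f' : G → E} (h : IntegrableOn f Λ μ) (h' : IntegrableOn f' Λ μ) :
    avS μ Λ (fun g => f g + f' g) = avS μ Λ f + avS μ Λ f' := by
  unfold avS; rw [integral_add h h', smul_add]

theorem avS_sub {f f' : G → E} (h : IntegrableOn f Λ μ) (h' : IntegrableOn f' Λ μ) :
    avS μ Λ (fun g => f g - f' g) = avS μ Λ f - avS μ Λ f' := by
  unfold avS; rw [integral_sub h h', smul_sub]

theorem avS_const (h0 : 0 < μ Λ) (hΛ : μ Λ < ⊤) (c : E) [CompleteSpace E] :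
    avS μ Λ (fun _ => c) = c := by
  unfold avS
  rw [setIntegral_const, Measure.real, inv_smul_smul₀]
  exact (ENNReal.toReal_pos h0.ne' hΛ.ne).ne'

theorem avS_mul_left (c : ℂ) (f : G → ℂ) : avS μ Λ (fun g => c * f g) = c * avS μ Λ f := by
  unfold avS; rw [integral_const_mul, mul_smul_comm]

theorem avS_mul_leftR (c : ℝ) (f : G → ℝ) : avS μ Λ (fun g => c * f g) = c * avS μ Λ f := by
  unfold avS; rw [integral_const_mul, mul_smul_comm]

theorem avS_mono {f f' : G → ℝ} (h0 : ∀ g, 0 ≤ f g) (h' : IntegrableOn f' Λ μ)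
    (hle : ∀ g, f g ≤ f' g) : avS μ Λ f ≤ avS μ Λ f' := by
  unfold avS
  simp only [smul_eq_mul]
  refine mul_le_mul_of_nonneg_left ?_ (by positivity)
  exact integral_mono_of_nonneg (Eventually.of_forall h0) h' (Eventually.of_forall hle)

theorem norm_avS_le (f : G → E) : ‖avS μ Λ f‖ ≤ avS μ Λ (fun g => ‖f g‖) := by
  unfold avS
  rw [norm_smul, norm_inv, Real.norm_of_nonneg ENNReal.toReal_nonneg, smul_eq_mul]
  gcongr
  exact norm_integral_le_integral_norm _

theorem avS_nonneg {f : G → ℝ} (h0 : ∀ g, 0 ≤ f g) : 0 ≤ avS μ Λ f := by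
  unfold avS
  exact smul_nonneg (by positivity) (integral_nonneg h0)

end avg

section avg2
variable {G E : Type*} [CommGroup G] [MeasurableSpace G] [MeasurableMul G]
    [NormedAddCommGroup E] [NormedSpace ℝ E]
    {μ : Measure G} [μ.IsMulRightInvariant] {Λ : Set G}

theorem avS_translate (hm : MeasurableSet Λ) (hΛ : μ Λ < ⊤) {f : G → E} (hf : StronglyMeasurable f)
    {K : ℝ} (hK : ∀ g, ‖f g‖ ≤ K) (k : G) :
    ‖avS μ Λ (fun g => f (g * k)) - avS μ Λ f‖ ≤
      K * ((μ (symmDiff Λ (Λ * {k}))).toReal / (μ Λ).toReal) := by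
  set S := Λ * {k} with hS
  have hSpre : S = (fun g => g * k⁻¹) ⁻¹' Λ := by
    ext g; simp [hS, Set.mem_preimage]
  have hSm : MeasurableSet S := by rw [hSpre]; exact measurable_mul_const _ hm
  have hSfin : μ S < ⊤ := by rw [hSpre, measure_preimage_mul_right]; exact hΛ
  have h1 : ∫ g in Λ, f (g * k) ∂μ = ∫ g in S, f g ∂μ := by
    have := (measurePreserving_mul_right μ k).setIntegral_preimage_emb
      (measurableEmbedding_mulRight k) f S
    rw [← this]
    congr 2
    ext g; simp [hSpre]
  have hKnn : 0 ≤ K := (norm_nonneg _).trans (hK 1)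
  have e1 := integral_inter_add_sdiff (f := f) hm (bdd_integrableOn hSfin hf hK)
  have e2 := integral_inter_add_sdiff (f := f) hSm (bdd_integrableOn hΛ hf hK)
  have b1 : ‖∫ g in S \ Λ, f g ∂μ‖ ≤ K * μ.real (S \ Λ) :=
    norm_setIntegral_le_of_norm_le_const (measure_lt_top_of_subset Set.sdiff_subset hSfin.ne)
      (fun g _ => hK g)
  have b2 : ‖∫ g in Λ \ S, f g ∂μ‖ ≤ K * μ.real (Λ \ S) :=
    norm_setIntegral_le_of_norm_le_const (measure_lt_top_of_subset Set.sdiff_subset hΛ.ne)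
      (fun g _ => hK g)
  have hsd : (μ (symmDiff Λ S)).toReal = μ.real (Λ \ S) + μ.real (S \ Λ) :=
    measureReal_symmDiff_eq hm hSm hΛ.ne hSfin.ne
  unfold avS
  rw [← smul_sub, norm_smul, norm_inv, Real.norm_of_nonneg ENNReal.toReal_nonneg, h1, hsd,
    ← e1, ← e2, Set.inter_comm Λ S, add_sub_add_left_eq_sub]
  calc (μ Λ).toReal⁻¹ * ‖(∫ g in S \ Λ, f g ∂μ) - ∫ g in Λ \ S, f g ∂μ‖
      ≤ (μ Λ).toReal⁻¹ * (K * μ.real (S \ Λ) + K * μ.real (Λ \ S)) := by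
        gcongr; exact (norm_sub_le _ _).trans (add_le_add b1 b2)
    _ = _ := by ring

theorem FNet.translate {ι : Type*} {l : Filter ι} {Λ : ι → Set G} (F : FNet μ l Λ) (K : ℝ) (k : G) :
    ∀ ε > 0, ∀ᶠ α in l, ∀ f : G → E, StronglyMeasurable f → (∀ g, ‖f g‖ ≤ K) →
      ‖avS μ (Λ α) (fun g => f (g * k)) - avS μ (Λ α) f‖ ≤ ε := by
  intro ε hε
  have h := (F.fol k).const_mul K
  rw [mul_zero] at h
  filter_upwards [F.meas, F.fin, h.eventually_lt_const hε] with α h1 h2 h3 f hf hK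
  exact (avS_translate h1 h2.2 hf hK k).trans h3.le

end avg2

/-- Isometric weakly measurable representation. -/
structure RepU {G H : Type*} [CommGroup G] [MeasurableSpace G] [NormedAddCommGroup H]
    [InnerProductSpace ℂ H] (U : G → H →L[ℂ] H) : Prop where
  one : ∀ v, U 1 v = v
  mul : ∀ g h v, U g (U h v) = U (g * h) v
  norm : ∀ g v, ‖U g v‖ = ‖v‖
  meas : ∀ v w, Measurable fun g => (inner ℂ v (U g w) : ℂ)

section rep
variable {G H : Type*} [CommGroup G] [MeasurableSpace G] [MeasurableMul G] [NormedAddCommGroup H]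
    [InnerProductSpace ℂ H] {U : G → H →L[ℂ] H}
    {μ : Measure G} [μ.IsMulRightInvariant] {ι : Type*} {l : Filter ι} {Λ : ι → Set G}

theorem RepU.inn (R : RepU U) (g : G) (v w : H) :
    (inner ℂ (U g v) (U g w) : ℂ) = inner ℂ v w := by
  let f : H →ₗᵢ[ℂ] H := ⟨(U g).toLinearMap, R.norm g⟩
  exact f.inner_map_map v w

theorem RepU.adj (R : RepU U) (g : G) (v w : H) :
    (inner ℂ (U g v) w : ℂ) = inner ℂ v (U g⁻¹ w) := by
  rw [← R.inn g v (U g⁻¹ w), R.mul, mul_inv_cancel, R.one]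

theorem RepU.bound (R : RepU U) (g : G) (v w : H) : ‖(inner ℂ v (U g w) : ℂ)‖ ≤ ‖v‖ * ‖w‖ := by
  have := norm_inner_le_norm (𝕜 := ℂ) v (U g w)
  rwa [R.norm] at this

theorem RepU.integ (R : RepU U) {Λ : Set G} {μ : Measure G} (h : μ Λ < ⊤) (v w : H) :
    IntegrableOn (fun g => (inner ℂ v (U g w) : ℂ)) Λ μ :=
  bdd_integrableOn h (R.meas v w).stronglyMeasurable (fun g => R.bound g v w)

theorem mean_erg [CompleteSpace H] (R : RepU U) (F : FNet μ l Λ) (x : H)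
    (hx : ∀ y, (∀ g, U g y = y) → (inner ℂ y x : ℂ) = 0) :
    ∀ ε > 0, ∀ᶠ α in l, ∀ v, ‖avS μ (Λ α) (fun g => (inner ℂ v (U g x) : ℂ))‖ ≤ ε * ‖v‖ := by
  let D : Submodule ℂ H := Submodule.span ℂ {y | ∃ k z, y = U k z - z}
  have hxD : x ∈ closure (D : Set H) := by
    rw [← Submodule.topologicalClosure_coe, ← Submodule.orthogonal_orthogonal_eq_closure]
    intro y hy
    refine hx y fun g => ?_
    apply ext_inner_right ℂ
    intro z
    have := hy (U g⁻¹ z - z) (Submodule.subset_span ⟨_, _, rfl⟩)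
    rw [R.adj, ← sub_eq_zero, ← inner_sub_right, ← inner_conj_symm, this, map_zero]
  have hDs : ∀ y ∈ D, ∀ ε > 0, ∀ᶠ α in l, ∀ v,
      ‖avS μ (Λ α) (fun g => (inner ℂ v (U g y) : ℂ))‖ ≤ ε * ‖v‖ := by
    intro y hy
    induction hy using Submodule.span_induction with
    | mem y hy =>
      obtain ⟨k, z, rfl⟩ := hy
      intro ε hε
      have h := (F.fol k).const_mul ‖z‖
      rw [mul_zero] at h
      filter_upwards [F.meas, F.fin, h.eventually_lt_const hε] with α h1 h2 h3 v
      have := avS_translate h1 h2.2 (R.meas v z).stronglyMeasurable (fun g => R.bound g v z) k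
      simp only [map_sub, inner_sub_right]
      rw [avS_sub (R.integ h2.2 _ _) (R.integ h2.2 _ _)]
      simp only [R.mul]
      refine this.trans ?_
      calc _ = (‖z‖ * ((μ (symmDiff (Λ α) (Λ α * {k}))).toReal / (μ (Λ α)).toReal)) * ‖v‖ := by ring
        _ ≤ _ := by gcongr
    | zero => 
      intro ε hε
      refine Eventually.of_forall fun α v => ?_
      simp only [map_zero, inner_zero_right, avS, integral_zero, smul_zero, norm_zero]
      positivity
    | add y y' _ _ h h' =>
      intro ε hε
      filter_upwards [F.fin, h (ε/2) (by positivity), h' (ε/2) (by positivity)] with α h2 h3 h4 v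
      simp only [map_add, inner_add_right]
      rw [avS_add (R.integ h2.2 _ _) (R.integ h2.2 _ _)]
      refine (norm_add_le _ _).trans ((add_le_add (h3 v) (h4 v)).trans (by linarith))
    | smul c y _ h =>
      intro ε hε
      filter_upwards [h (ε/(‖c‖+1)) (by positivity)] with α h3 v
      simp only [map_smul, inner_smul_right]
      rw [avS_mul_left, norm_mul]
      calc ‖c‖ * _ ≤ ‖c‖ * (ε/(‖c‖+1) * ‖v‖) := by gcongr; exact h3 v
        _ = (‖c‖ / (‖c‖+1)) * (ε * ‖v‖) := by ring
        _ ≤ 1 * (ε * ‖v‖) := by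
          gcongr
          rw [div_le_one (by positivity)]; linarith
        _ = _ := one_mul _
  intro ε hε
  obtain ⟨y, hy, hd⟩ := Metric.mem_closure_iff.1 hxD (ε/2) (by positivity)
  filter_upwards [F.fin, hDs y hy (ε/2) (by positivity)] with α h2 h3 v
  have : (fun g => (inner ℂ v (U g x) : ℂ)) =
      fun g => (inner ℂ v (U g y) : ℂ) + inner ℂ v (U g (x - y)) := by
    funext g; rw [← inner_add_right, ← map_add]; simp
  rw [this, avS_add (R.integ h2.2 _ _) (R.integ h2.2 _ _)]
  have h5 : ‖avS μ (Λ α) (fun g => (inner ℂ v (U g (x - y)) : ℂ))‖ ≤ ‖v‖ * (ε/2) := by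
    refine avS_norm_le h2.2 (by positivity) fun g _ => (R.bound g v _).trans ?_
    gcongr
    rw [← dist_eq_norm]; exact hd.le
  refine (norm_add_le _ _).trans ((add_le_add (h3 v) h5).trans (by linarith))

end rep

section flight
variable {G H : Type*} [CommGroup G] [MeasurableSpace G] [MeasurableMul G] [NormedAddCommGroup H]
    [InnerProductSpace ℂ H] [CompleteSpace H] {U : G → H →L[ℂ] H}
    {μ : Measure G} [μ.IsMulRightInvariant] {ι : Type*} {l : Filter ι} {Λ : ι → Set G}

theorem flight_ultra (R : RepU U) (𝒰 : Ultrafilter ι) (F : FNet μ (𝒰 : Filter ι) Λ) (x : H)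
    (hx : ∀ e : H, e ≠ 0 → (∃ lam : G → ℂ, ∀ g, U g e = lam g • e) → (inner ℂ e x : ℂ) = 0)
    (v : H) :
    Tendsto (fun α => avS μ (Λ α) (fun g => ‖(inner ℂ v (U g x) : ℂ)‖ ^ 2)) 𝒰 (𝓝 0) := by
  let f : H → H → G → ℂ := fun v w g => inner ℂ v (U g x) * inner ℂ (U g x) w
  have hm' : ∀ w, Measurable fun g => (inner ℂ (U g x) w : ℂ) := by
    intro w
    have := Complex.continuous_conj.measurable.comp (R.meas w x)
    convert this using 2 with g
    exact (inner_conj_symm _ _).symm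
  have hfm : ∀ v w, StronglyMeasurable (f v w) := fun v w =>
    ((R.meas v x).mul (hm' w)).stronglyMeasurable
  have hfb : ∀ v w g, ‖f v w g‖ ≤ ‖x‖ ^ 2 * ‖v‖ * ‖w‖ := by
    intro v w g
    rw [norm_mul]
    calc _ ≤ (‖v‖ * ‖x‖) * (‖x‖ * ‖w‖) := by
          gcongr
          · exact R.bound g v x
          · have := norm_inner_le_norm (𝕜 := ℂ) (U g x) w
            rwa [R.norm] at this
      _ = _ := by ring
  have hint : ∀ᶠ α in (𝒰 : Filter ι), ∀ v w, IntegrableOn (f v w) (Λ α) μ := by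
    filter_upwards [F.fin] with α h v w
    exact bdd_integrableOn h.2 (hfm v w) (hfb v w)
  have hlim : ∀ v w, ∃ b : ℂ, ‖b‖ ≤ ‖x‖ ^ 2 * ‖v‖ * ‖w‖ ∧
      Tendsto (fun α => avS μ (Λ α) (f v w)) 𝒰 (𝓝 b) := by
    intro v w
    obtain ⟨b, hb, hb'⟩ := (isCompact_closedBall (0 : ℂ) (‖x‖ ^ 2 * ‖v‖ * ‖w‖)).ultrafilter_le_nhds'
      (𝒰.map (fun α => avS μ (Λ α) (f v w))) (by
        rw [Ultrafilter.mem_map]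
        change ∀ᶠ α in (𝒰 : Filter ι), _
        filter_upwards [F.fin] with α h
        simp only [Set.mem_preimage, mem_closedBall_zero_iff]
        exact avS_norm_le h.2 (by positivity) fun g _ => hfb v w g)
    exact ⟨b, by simpa using hb, hb'⟩
  choose B hBn hBl using hlim
  have hl1 : ∀ v v' w, B (v + v') w = B v w + B v' w := by
    intro v v' w
    refine tendsto_nhds_unique (hBl _ _) (((hBl v w).add (hBl v' w)).congr' ?_)
    filter_upwards [hint] with α h
    rw [← avS_add (h _ _) (h _ _)]
    congr 1; funext g; simp only [f, inner_add_left]; ring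
  have hl2 : ∀ (c : ℂ) v w, B (c • v) w = (starRingEnd ℂ) c • B v w := by
    intro c v w
    refine tendsto_nhds_unique (hBl _ _) (((hBl v w).const_mul ((starRingEnd ℂ) c)).congr fun α => ?_)
    rw [← avS_mul_left]
    congr 1; funext g; simp only [f, inner_smul_left]; ring
  have hl3 : ∀ v w w', B v (w + w') = B v w + B v w' := by
    intro v w w'
    refine tendsto_nhds_unique (hBl _ _) (((hBl v w).add (hBl v w')).congr' ?_)
    filter_upwards [hint] with α h
    rw [← avS_add (h _ _) (h _ _)]
    congr 1; funext g; simp only [f, inner_add_right]; ring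
  have hl4 : ∀ (c : ℂ) v w, B v (c • w) = c • B v w := by
    intro c v w
    refine tendsto_nhds_unique (hBl _ _) (((hBl v w).const_mul c).congr fun α => ?_)
    rw [← avS_mul_left]
    congr 1; funext g; simp only [f, inner_smul_right]; ring
  have hconj : ∀ v w, B w v = (starRingEnd ℂ) (B v w) := by
    intro v w
    refine tendsto_nhds_unique (hBl _ _)
      (((Complex.continuous_conj.tendsto _).comp (hBl v w)).congr fun α => ?_)
    simp only [Function.comp, avS, Complex.real_smul, map_mul, Complex.conj_ofReal]
    rw [← integral_conj]
    congr 2; funext g; simp only [f, map_mul, inner_conj_symm]; ring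
  have hdiag : ∀ v, Tendsto (fun α => avS μ (Λ α) (fun g => ‖(inner ℂ v (U g x) : ℂ)‖ ^ 2)) 𝒰
      (𝓝 (B v v).re) := by
    intro v
    refine ((Complex.continuous_re.tendsto _).comp (hBl v v)).congr fun α => ?_
    have : f v v = fun g => (((‖(inner ℂ v (U g x) : ℂ)‖ ^ 2 : ℝ)) : ℂ) := by
      funext g
      simp only [f]
      rw [← inner_conj_symm (U g x) v, Complex.mul_conj, Complex.normSq_eq_norm_sq]
    simp only [Function.comp, this, avS]
    have h5 : ∫ g in Λ α, (((‖(inner ℂ v (U g x) : ℂ)‖ ^ 2 : ℝ)) : ℂ) ∂μ =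
        ((∫ g in Λ α, ‖(inner ℂ v (U g x) : ℂ)‖ ^ 2 ∂μ : ℝ) : ℂ) := integral_complex_ofReal
    rw [h5, Complex.real_smul, ← Complex.ofReal_mul, Complex.ofReal_re, smul_eq_mul]
  let BB : H →L⋆[ℂ] H →L[ℂ] ℂ := LinearMap.mkContinuous₂
    (LinearMap.mk₂'ₛₗ (starRingEnd ℂ) (RingHom.id ℂ) B hl1 hl2 hl3 hl4) (‖x‖ ^ 2) hBn
  let T : H →L[ℂ] H := InnerProductSpace.continuousLinearMapOfBilin BB
  have hT : ∀ v w, (inner ℂ (T v) w : ℂ) = B v w := fun v w =>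
    InnerProductSpace.continuousLinearMapOfBilin_apply BB v w
  have hsymm : T.IsSymmetric := by
    intro v w
    change (inner ℂ (T v) w : ℂ) = inner ℂ v (T w)
    rw [← inner_conj_symm v, hT, hT, hconj w v]
  have hpos : T.IsPositive := by
    refine ⟨hsymm, fun v => ?_⟩
    change 0 ≤ (inner ℂ (T v) v : ℂ).re
    rw [hT]
    exact ge_of_tendsto' (hdiag v) fun α => avS_nonneg fun g => by positivity
  have hcomp : IsCompactOperator T := by
    refine aux_compact T hpos (‖x‖ ^ 2) fun n e he => ?_
    simp only [hT]
    have h1 := tendsto_finsetSum Finset.univ (fun i _ => hdiag (e i))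
    refine le_of_tendsto h1 ?_
    filter_upwards [F.fin] with α h
    have hs : ∑ i, avS μ (Λ α) (fun g => ‖(inner ℂ (e i) (U g x) : ℂ)‖ ^ 2) =
        avS μ (Λ α) (fun g => ∑ i, ‖(inner ℂ (e i) (U g x) : ℂ)‖ ^ 2) := by
      unfold avS
      rw [integral_finsetSum, Finset.smul_sum]
      intro i _
      refine bdd_integrableOn h.2 ((R.meas (e i) x).norm.pow_const 2).stronglyMeasurable
        (K := (‖e i‖ * ‖x‖) ^ 2) fun g => ?_
      rw [norm_pow, norm_norm]
      exact pow_le_pow_left₀ (norm_nonneg _) (R.bound g _ _) 2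
    rw [hs]
    refine (Real.le_norm_self _).trans (avS_norm_le h.2 (sq_nonneg ‖x‖) fun g _ => ?_)
    rw [Real.norm_of_nonneg (Finset.sum_nonneg fun i _ => by positivity)]
    have := he.sum_inner_products_le (x := U g x) (s := Finset.univ)
    rwa [R.norm] at this
  have hinv : ∀ k v w, B (U k v) w = B v (U k⁻¹ w) := by
    intro k v w
    have h0 : Tendsto (fun α => avS μ (Λ α) (fun g => f v (U k⁻¹ w) (g * k⁻¹)) -
        avS μ (Λ α) (f v (U k⁻¹ w))) 𝒰 (𝓝 0) := by
      rw [Metric.tendsto_nhds]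
      intro ε hε
      filter_upwards [F.translate (E := ℂ) (‖x‖ ^ 2 * ‖v‖ * ‖U k⁻¹ w‖) k⁻¹ (ε/2) (by positivity)]
        with α h
      rw [dist_zero_right]
      exact (h _ (hfm _ _) (hfb _ _)).trans_lt (by linarith)
    have h1 : (fun g => f v (U k⁻¹ w) (g * k⁻¹)) = f (U k v) w := by
      funext g
      simp only [f]
      have e1 : (inner ℂ (U k v) (U g x) : ℂ) = inner ℂ v (U (g * k⁻¹) x) := by
        rw [R.adj, R.mul, mul_comm k⁻¹ g]
      have e2 : (inner ℂ (U (g * k⁻¹) x) (U k⁻¹ w) : ℂ) = inner ℂ (U g x) w := by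
        rw [mul_comm g k⁻¹, ← R.mul k⁻¹ g, R.inn]
      rw [e1, e2]
    rw [h1] at h0
    have h2 := h0.add (hBl v (U k⁻¹ w))
    simp only [sub_add_cancel, zero_add] at h2
    exact tendsto_nhds_unique (hBl _ _) h2
  have hTU : ∀ k v, T (U k v) = U k (T v) := by
    intro k v
    apply ext_inner_right ℂ
    intro w
    rw [hT, hinv, R.adj, hT]
  have hT0 : T = 0 := by
    refine (ContinuousLinearMap.eq_zero_of_forall_hasEigenvalue_eq_zero hcomp hsymm).1 ?_
    intro c hc
    by_contra hc0
    have := ContinuousLinearMap.finite_dimensional_eigenspace hcomp c hc0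
    obtain ⟨e, heW, he, lam, hlam⟩ := aux_joint U (fun g h v => by rw [R.mul, R.mul, mul_comm])
      _ (Module.End.eigenspace (T : H →ₗ[ℂ] H) c) this rfl hc (by
        intro g v hv
        rw [Module.End.mem_eigenspace_iff] at hv ⊢
        change T (U g v) = c • U g v
        have hv' : T v = c • v := hv
        rw [hTU, hv', map_smul])
    rw [Module.End.mem_eigenspace_iff] at heW
    have heW' : T e = c • e := heW
    have h0 : ∀ g, (inner ℂ e (U g x) : ℂ) = 0 := by
      intro g
      have := R.adj g⁻¹ e x
      rw [inv_inv] at this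
      rw [← this, hlam, inner_smul_left, hx e he ⟨lam, hlam⟩, mul_zero]
    have hTe : T e = 0 := by
      apply ext_inner_right ℂ
      intro w
      rw [hT, inner_zero_left]
      refine tendsto_nhds_unique (hBl _ _) (tendsto_const_nhds.congr fun α => ?_)
      simp [f, h0, avS]
    rw [heW'] at hTe
    exact (smul_ne_zero hc0 he) hTe
  have hB0 : (B v v).re = 0 := by rw [← hT, hT0]; simp
  rw [← hB0]
  exact hdiag v

theorem sq_integ (R : RepU U) {Λ : Set G} (h : μ Λ < ⊤) (v w : H) :
    IntegrableOn (fun g => ‖(inner ℂ v (U g w) : ℂ)‖ ^ 2) Λ μ :=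
  bdd_integrableOn h ((R.meas v w).norm.pow_const 2).stronglyMeasurable
    (K := (‖v‖ * ‖w‖) ^ 2) fun g => by
      rw [norm_pow, norm_norm]
      exact pow_le_pow_left₀ (norm_nonneg _) (R.bound g _ _) 2

theorem flight_pt [l.NeBot] (R : RepU U) (F : FNet μ l Λ) (x : H)
    (hx : ∀ e : H, e ≠ 0 → (∃ lam : G → ℂ, ∀ g, U g e = lam g • e) → (inner ℂ e x : ℂ) = 0)
    (n : ℕ) (y : ℕ → H) (ε : ℝ) (hε : 0 < ε) :
    ∃ g, ∀ i < n, ‖(inner ℂ (y i) (U g x) : ℂ)‖ ^ 2 ≤ ε := by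
  by_contra hcon
  push Not at hcon
  have F' := F.mono (Ultrafilter.of_le l)
  have h1 := tendsto_finsetSum (Finset.range n)
    (fun i _ => flight_ultra R (Ultrafilter.of l) F' x hx (y i))
  simp only [Finset.sum_const_zero] at h1
  obtain ⟨α, h2, h3⟩ := (F'.fin.and (h1.eventually_lt_const hε)).exists
  have hs : ∑ i ∈ Finset.range n, avS μ (Λ α) (fun g => ‖(inner ℂ (y i) (U g x) : ℂ)‖ ^ 2) =
      avS μ (Λ α) (fun g => ∑ i ∈ Finset.range n, ‖(inner ℂ (y i) (U g x) : ℂ)‖ ^ 2) := by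
    unfold avS
    rw [integral_finsetSum, Finset.smul_sum]
    intro i _
    exact sq_integ R h2.2 _ _
  rw [hs] at h3
  have h4 : avS μ (Λ α) (fun _ => ε) ≤
      avS μ (Λ α) (fun g => ∑ i ∈ Finset.range n, ‖(inner ℂ (y i) (U g x) : ℂ)‖ ^ 2) := by
    refine avS_mono (fun _ => hε.le) (integrable_finsetSum _ fun i _ => sq_integ R h2.2 _ _)
      fun g => ?_
    obtain ⟨i, hi, hlt⟩ := hcon g
    exact hlt.le.trans (Finset.single_le_sum
      (f := fun i => ‖(inner ℂ (y i) (U g x) : ℂ)‖ ^ 2) (fun i _ => by positivity)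
      (Finset.mem_range.2 hi))
  rw [avS_const h2.1 h2.2] at h4
  linarith

/-- Selberg-type Bessel inequality. -/
theorem bessel_almost (n : ℕ) (y : ℕ → H) (M : ℝ) (hM0 : 0 ≤ M)
    (hM : ∀ i < n, ∑ k ∈ Finset.range n, ‖(inner ℂ (y i) (y k) : ℂ)‖ ≤ M) (w : H) :
    ∑ i ∈ Finset.range n, ‖(inner ℂ w (y i) : ℂ)‖ ^ 2 ≤ M * ‖w‖ ^ 2 := by
  set s := Finset.range n
  set c : ℕ → ℂ := fun i => inner ℂ (y i) w with hc
  set S := ∑ i ∈ s, ‖(inner ℂ w (y i) : ℂ)‖ ^ 2 with hS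
  have hcn : ∀ i, ‖(inner ℂ w (y i) : ℂ)‖ = ‖c i‖ := fun i => norm_inner_symm _ _
  set z := ∑ i ∈ s, c i • y i with hz
  have hS0 : 0 ≤ S := Finset.sum_nonneg fun i _ => by positivity
  have h1 : (inner ℂ w z : ℂ) = (S : ℂ) := by
    rw [hz, inner_sum, hS]
    push_cast
    refine Finset.sum_congr rfl fun i _ => ?_
    rw [inner_smul_right, hcn, ← inner_conj_symm w (y i), Complex.mul_conj,
      Complex.normSq_eq_norm_sq]
    push_cast; rfl
  have h2 : ‖z‖ ^ 2 ≤ M * S := by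
    have e1 : ‖z‖ ^ 2 = ‖(inner ℂ z z : ℂ)‖ := by
      rw [inner_self_eq_norm_sq_to_K]; simp
    have e2 : (inner ℂ z z : ℂ) = ∑ i ∈ s, ∑ k ∈ s,
        (starRingEnd ℂ) (c i) * (c k * inner ℂ (y i) (y k)) := by
      rw [hz, sum_inner]
      refine Finset.sum_congr rfl fun i _ => ?_
      rw [inner_sum]
      refine Finset.sum_congr rfl fun k _ => ?_
      rw [inner_smul_left, inner_smul_right]
    have hsym : ∑ i ∈ s, ∑ k ∈ s, ‖c k‖ ^ 2 * ‖(inner ℂ (y i) (y k) : ℂ)‖ =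
        ∑ i ∈ s, ∑ k ∈ s, ‖c i‖ ^ 2 * ‖(inner ℂ (y i) (y k) : ℂ)‖ := by
      rw [Finset.sum_comm]
      refine Finset.sum_congr rfl fun i _ => Finset.sum_congr rfl fun k _ => ?_
      rw [norm_inner_symm (y k) (y i)]
    rw [e1, e2]
    calc _ ≤ ∑ i ∈ s, ∑ k ∈ s, ((‖c i‖ ^ 2 * ‖(inner ℂ (y i) (y k) : ℂ)‖) / 2 +
          (‖c k‖ ^ 2 * ‖(inner ℂ (y i) (y k) : ℂ)‖) / 2) := by
          refine (norm_sum_le _ _).trans (Finset.sum_le_sum fun i _ => (norm_sum_le _ _).trans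
            (Finset.sum_le_sum fun k _ => ?_))
          rw [norm_mul, norm_mul, RCLike.norm_conj]
          nlinarith [mul_nonneg (sq_nonneg (‖c i‖ - ‖c k‖))
            (norm_nonneg (inner ℂ (y i) (y k) : ℂ))]
      _ = ∑ i ∈ s, ∑ k ∈ s, ‖c i‖ ^ 2 * ‖(inner ℂ (y i) (y k) : ℂ)‖ := by
          simp only [Finset.sum_add_distrib, ← Finset.sum_div]
          rw [hsym]; ring
      _ ≤ ∑ i ∈ s, ‖c i‖ ^ 2 * M := by
          refine Finset.sum_le_sum fun i hi => ?_
          rw [← Finset.mul_sum]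
          gcongr
          exact hM i (Finset.mem_range.1 hi)
      _ = M * S := by
          rw [← Finset.sum_mul, mul_comm, hS]
          congr 1
          exact Finset.sum_congr rfl fun i _ => by rw [hcn]
  have h3 : S ≤ ‖w‖ * ‖z‖ := by
    have := norm_inner_le_norm (𝕜 := ℂ) w z
    rwa [h1, Complex.norm_real, Real.norm_of_nonneg hS0] at this
  rcases hS0.eq_or_lt with h0 | h0
  · rw [← h0]
    positivity
  · have : S * S ≤ ‖w‖ ^ 2 * (M * S) := by
      calc S * S ≤ (‖w‖ * ‖z‖) * (‖w‖ * ‖z‖) := by gcongr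
        _ = ‖w‖ ^ 2 * ‖z‖ ^ 2 := by ring
        _ ≤ _ := by gcongr
    have h7 : S * S ≤ (M * ‖w‖ ^ 2) * S := by linarith
    exact le_of_mul_le_mul_right h7 h0

theorem flight_pts [l.NeBot] (R : RepU U) (F : FNet μ l Λ) (x : H)
    (hx : ∀ e : H, e ≠ 0 → (∃ lam : G → ℂ, ∀ g, U g e = lam g • e) → (inner ℂ e x : ℂ) = 0)
    (δ : ℝ) (hδ : 0 < δ) (n : ℕ) :
    ∃ k : ℕ → G, ∀ i < n, ∀ m < n, i ≠ m → ‖(inner ℂ (U (k i) x) (U (k m) x) : ℂ)‖ ≤ δ := by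
  induction n with
  | zero => exact ⟨fun _ => 1, fun i hi => absurd hi (by omega)⟩
  | succ n ih =>
    obtain ⟨k, hk⟩ := ih
    obtain ⟨g, hg⟩ := flight_pt R F x hx n (fun i => U (k i) x) (δ ^ 2) (by positivity)
    have hg' : ∀ i < n, ‖(inner ℂ (U (k i) x) (U g x) : ℂ)‖ ≤ δ := fun i hi =>
      le_of_sq_le_sq (hg i hi) hδ.le
    refine ⟨fun i => if i < n then k i else g, fun i hi m hm him => ?_⟩
    by_cases h1 : i < n <;> by_cases h2 : m < n <;> simp only [h1, h2, if_true, if_false]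
    · exact hk i h1 m h2 him
    · exact hg' i h1
    · rw [norm_inner_symm]; exact hg' m h2
    · omega

theorem flight_unif [l.NeBot] (R : RepU U) (F : FNet μ l Λ) (x : H)
    (hx : ∀ e : H, e ≠ 0 → (∃ lam : G → ℂ, ∀ g, U g e = lam g • e) → (inner ℂ e x : ℂ) = 0)
    (Rad ε : ℝ) (hε : 0 < ε) :
    ∀ᶠ α in l, ∀ v : H, ‖v‖ ≤ Rad →
      avS μ (Λ α) (fun g => ‖(inner ℂ v (U g x) : ℂ)‖ ^ 2) ≤ ε := by
  obtain ⟨N0, hN0⟩ := exists_nat_ge (‖x‖ ^ 2 * Rad ^ 2 / (ε / 4))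
  rw [div_le_iff₀ (by positivity)] at hN0
  set N := N0 + 1 with hN
  have hNpos : (0 : ℝ) < N := by rw [hN]; positivity
  have hN1 : ‖x‖ ^ 2 * Rad ^ 2 ≤ N * (ε / 4) := by
    refine hN0.trans ?_
    gcongr
    omega
  set δ := ε / (4 * (Rad ^ 2 + 1)) with hδ
  have hδ0 : 0 < δ := by positivity
  have hδ1 : δ * Rad ^ 2 ≤ ε / 4 := by
    have : δ * (Rad ^ 2 + 1) = ε / 4 := by rw [hδ]; field_simp
    nlinarith
  obtain ⟨k, hk⟩ := flight_pts R F x hx δ hδ0 N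
  have hB := bessel_almost N (fun i => U (k i) x) (‖x‖ ^ 2 + N * δ) (by positivity) (by
    intro i hi
    calc _ ≤ ∑ m ∈ Finset.range N, ((if m = i then ‖x‖ ^ 2 else 0) + δ) := by
          refine Finset.sum_le_sum fun m hm => ?_
          by_cases h : m = i
          · subst h
            simp only [if_true]
            have := norm_inner_le_norm (𝕜 := ℂ) (U (k m) x) (U (k m) x)
            rw [R.norm] at this
            nlinarith
          · simp only [h, if_false, zero_add]
            exact hk i hi m (Finset.mem_range.1 hm) (Ne.symm h)
      _ = _ := by
          rw [Finset.sum_add_distrib, Finset.sum_ite_eq' (Finset.range N) i]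
          simp [Finset.mem_range.2 hi, hi])
  have htr : ∀ᶠ α in l, ∀ i ∈ Finset.range N, ∀ f : G → ℝ, StronglyMeasurable f →
      (∀ g, ‖f g‖ ≤ (Rad * ‖x‖) ^ 2) →
      ‖avS μ (Λ α) (fun g => f (g * k i)) - avS μ (Λ α) f‖ ≤ ε / 2 :=
    (Finset.eventually_all (Finset.range N)).2 fun i _ =>
      F.translate ((Rad * ‖x‖) ^ 2) (k i) (ε / 2) (by positivity)
  filter_upwards [htr, F.fin] with α h1 h2 v hv
  have hRad : 0 ≤ Rad := (norm_nonneg v).trans hv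
  set f : G → ℝ := fun g => ‖(inner ℂ v (U g x) : ℂ)‖ ^ 2 with hf
  have hfm : StronglyMeasurable f := ((R.meas v x).norm.pow_const 2).stronglyMeasurable
  have hfb : ∀ g, ‖f g‖ ≤ (Rad * ‖x‖) ^ 2 := fun g => by
    rw [hf, norm_pow, norm_norm]
    refine pow_le_pow_left₀ (norm_nonneg _) ((R.bound g _ _).trans ?_) 2
    gcongr
  have hsh : ∀ i g, f (g * k i) = ‖(inner ℂ (U g⁻¹ v) (U (k i) x) : ℂ)‖ ^ 2 := by
    intro i g
    rw [R.adj, inv_inv, R.mul]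
  have hint : ∀ i, IntegrableOn (fun g => f (g * k i)) (Λ α) μ := fun i =>
    bdd_integrableOn h2.2 (hfm.comp_measurable (measurable_mul_const _)) fun g => hfb _
  have hs : ∑ i ∈ Finset.range N, avS μ (Λ α) (fun g => f (g * k i)) =
      avS μ (Λ α) (fun g => ∑ i ∈ Finset.range N, f (g * k i)) := by
    unfold avS
    rw [integral_finsetSum, Finset.smul_sum]
    exact fun i _ => hint i
  have h3 : avS μ (Λ α) (fun g => ∑ i ∈ Finset.range N, f (g * k i)) ≤
      (‖x‖ ^ 2 + N * δ) * Rad ^ 2 := by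
    refine (Real.le_norm_self _).trans (avS_norm_le h2.2 (by positivity) fun g _ => ?_)
    rw [Real.norm_of_nonneg (Finset.sum_nonneg fun i _ => by rw [hsh]; positivity)]
    simp only [hsh]
    refine (hB _).trans ?_
    rw [R.norm]
    gcongr
  have h4 : ∑ i ∈ Finset.range N, avS μ (Λ α) f ≤
      ∑ i ∈ Finset.range N, (avS μ (Λ α) (fun g => f (g * k i)) + ε / 2) :=
    Finset.sum_le_sum fun i hi => by
      have := h1 i hi f hfm hfb
      rw [Real.norm_eq_abs, abs_le] at this
      linarith [this.1]
  rw [Finset.sum_add_distrib, hs, Finset.sum_const, Finset.sum_const, Finset.card_range,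
    nsmul_eq_mul, nsmul_eq_mul] at h4
  have h5 : (N : ℝ) * avS μ (Λ α) f ≤ N * ε := by nlinarith
  exact le_of_mul_le_mul_left h5 hNpos

theorem flight_unif1 [l.NeBot] (R : RepU U) (F : FNet μ l Λ) (x : H)
    (hx : ∀ e : H, e ≠ 0 → (∃ lam : G → ℂ, ∀ g, U g e = lam g • e) → (inner ℂ e x : ℂ) = 0)
    (Rad ε : ℝ) (hε : 0 < ε) :
    ∀ᶠ α in l, ∀ v : H, ‖v‖ ≤ Rad →
      avS μ (Λ α) (fun g => ‖(inner ℂ v (U g x) : ℂ)‖) ≤ ε := by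
  filter_upwards [flight_unif R F x hx Rad (ε ^ 2 / 4) (by positivity), F.fin] with α h1 h2 v hv
  have h3 : avS μ (Λ α) (fun g => ‖(inner ℂ v (U g x) : ℂ)‖) ≤
      avS μ (Λ α) (fun g => ε / 2 + ε⁻¹ * ‖(inner ℂ v (U g x) : ℂ)‖ ^ 2) := by
    refine avS_mono (fun _ => norm_nonneg _) ?_ fun g => ?_
    · refine bdd_integrableOn h2.2 ?_ (K := ε / 2 + ε⁻¹ * (‖v‖ * ‖x‖) ^ 2) fun g => ?_
      · exact (measurable_const.add
          (measurable_const.mul ((R.meas v x).norm.pow_const 2))).stronglyMeasurable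
      · rw [Real.norm_of_nonneg (by positivity)]
        gcongr
        exact R.bound g v x
    · set t := ‖(inner ℂ v (U g x) : ℂ)‖
      have : ε / 2 + ε⁻¹ * t ^ 2 - t = ε⁻¹ * ((t - ε / 2) ^ 2 + ε ^ 2 / 4) := by
        field_simp; ring
      have h : 0 ≤ ε⁻¹ * ((t - ε / 2) ^ 2 + ε ^ 2 / 4) := by positivity
      linarith
  have hc : IntegrableOn (fun _ : G => ε / 2) (Λ α) μ :=
    bdd_integrableOn h2.2 stronglyMeasurable_const fun _ => le_rfl
  rw [avS_add hc ((sq_integ R h2.2 v x).const_mul _), avS_const h2.1 h2.2, avS_mul_leftR] at h3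
  have h4 : ε⁻¹ * avS μ (Λ α) (fun g => ‖(inner ℂ v (U g x) : ℂ)‖ ^ 2) ≤ ε⁻¹ * (ε ^ 2 / 4) := by
    gcongr
    exact h1 v hv
  have h5 : ε⁻¹ * (ε ^ 2 / 4) = ε / 4 := by field_simp
  linarith

end flight

section alg
variable {A : Type*} [NormedRing A] [StarRing A] [CStarRing A] [NormedAlgebra ℂ A]
    [CompleteSpace A] [StarModule ℂ A]
    {G : Type*} [CommGroup G] [MeasurableSpace G]
    {H : Type*} [NormedAddCommGroup H] [InnerProductSpace ℂ H] [CompleteSpace H]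

/-- The data of the theorem, gathered. -/
structure Sys (ω : A →ₗ[ℂ] ℂ) (τ : G → A ≃⋆ₐ[ℂ] A) (j : A →ₗ[ℂ] H) (U : G → H →L[ℂ] H) :
    Prop where
  pos : ∀ a : A, 0 ≤ ω (star a * a)
  one : ω 1 = 1
  tr : ∀ a b : A, ω (a * b) = ω (b * a)
  invm : Measurable (fun g : G => g⁻¹)
  τone : ∀ a : A, τ 1 a = a
  τmul : ∀ g h a, τ g (τ h a) = τ (g * h) a
  inv : ∀ g a, ω (τ g a) = ω a
  meas : ∀ a b : A, Measurable fun g : G => ω (a * τ g b)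
  dense : DenseRange j
  inn : ∀ a b : A, (inner ℂ (j a) (j b) : ℂ) = ω (star a * b)
  uj : ∀ g a, U g (j a) = j (τ g a)
  contr : ∀ g, ‖U g‖ ≤ 1

variable {ω : A →ₗ[ℂ] ℂ} {τ : G → A ≃⋆ₐ[ℂ] A} {j : A →ₗ[ℂ] H} {U : G → H →L[ℂ] H}

theorem norm_aut (σ : A ≃⋆ₐ[ℂ] A) (a : A) : ‖σ a‖ = ‖a‖ := by
  let : CStarAlgebra A := {}
  exact StarAlgEquiv.norm_map σ a

theorem Sys.ωeq (S : Sys ω τ j U) (a : A) : ω a = inner ℂ (j 1) (j a) := by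
  rw [S.inn]; simp

theorem Sys.ωmul (S : Sys ω τ j U) (a b : A) : ω (a * b) = inner ℂ (j (star a)) (j b) := by
  rw [S.inn]; simp

theorem Sys.norm_j (S : Sys ω τ j U) (a : A) : ‖j a‖ ≤ ‖a‖ := by
  let : CStarAlgebra A := {}
  let := CStarAlgebra.spectralOrder A
  have := CStarAlgebra.spectralOrderedRing A
  have h := CStarAlgebra.star_mul_le_algebraMap_norm_sq (a := a)
  obtain ⟨b, hb⟩ := CStarAlgebra.nonneg_iff_eq_star_mul_self.1 (sub_nonneg.2 h)
  have h2 := S.pos b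
  rw [← hb, map_sub, ← S.inn] at h2
  have h3 : ω (algebraMap ℝ A (‖a‖ ^ 2)) = ((‖a‖ ^ 2 : ℝ) : ℂ) := by
    rw [Algebra.algebraMap_eq_smul_one, ← Complex.coe_smul, map_smul, S.one]; simp
  rw [h3, inner_self_eq_norm_sq_to_K] at h2
  have h4 : ‖j a‖ ^ 2 ≤ ‖a‖ ^ 2 := by
    have h5 : (0 : ℂ) ≤ ((‖a‖ ^ 2 - ‖j a‖ ^ 2 : ℝ) : ℂ) := by
      rw [Complex.ofReal_sub, Complex.ofReal_pow ‖j a‖]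
      exact h2
    have := Complex.zero_le_real.1 h5
    linarith
  exact le_of_sq_le_sq h4 (norm_nonneg _)

theorem Sys.norm_j1 (S : Sys ω τ j U) : ‖j 1‖ = 1 := by
  have h : ((‖j 1‖ : ℂ)) ^ 2 = 1 := by
    have := inner_self_eq_norm_sq_to_K (𝕜 := ℂ) (j 1)
    rw [← S.ωeq, S.one] at this
    exact this.symm
  have h2 : ‖j 1‖ ^ 2 = 1 := by exact_mod_cast h
  nlinarith [norm_nonneg (j 1)]

theorem Sys.norm_ω (S : Sys ω τ j U) (a : A) : ‖ω a‖ ≤ ‖a‖ := by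
  rw [S.ωeq]
  refine (norm_inner_le_norm _ _).trans ?_
  rw [S.norm_j1, one_mul]
  exact S.norm_j a

theorem Sys.rep (S : Sys ω τ j U) : RepU U := by
  have hone : ∀ v, U 1 v = v := by
    intro v
    refine S.dense.induction_on v (isClosed_eq (U 1).continuous continuous_id) fun a => ?_
    rw [S.uj, S.τone]
  have hmul : ∀ g h v, U g (U h v) = U (g * h) v := by
    intro g h v
    refine S.dense.induction_on v
      (isClosed_eq ((U g).continuous.comp (U h).continuous) (U (g * h)).continuous) fun a => ?_
    rw [S.uj, S.uj, S.uj, S.τmul]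
  have hle : ∀ g v, ‖U g v‖ ≤ ‖v‖ := fun g v =>
    ((U g).le_of_opNorm_le (S.contr g) v).trans (by rw [one_mul])
  have hm0 : ∀ a b, Measurable fun g => (inner ℂ (j a) (U g (j b)) : ℂ) := by
    intro a b
    simp only [S.uj, S.inn]
    exact S.meas _ _
  have hm1 : ∀ v b, Measurable fun g => (inner ℂ v (U g (j b)) : ℂ) := by
    intro v b
    obtain ⟨u, hu⟩ := mem_closure_iff_seq_limit.1 (S.dense v)
    choose a ha using hu.1
    refine measurable_of_tendsto_metrizable (f := fun n g => (inner ℂ (u n) (U g (j b)) : ℂ))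
      (fun n => ?_) ?_
    · rw [← ha n]; exact hm0 _ _
    · rw [tendsto_pi_nhds]
      exact fun g => hu.2.inner tendsto_const_nhds
  refine ⟨hone, hmul, fun g v => le_antisymm (hle g v) ?_, fun v w => ?_⟩
  · have := hle g⁻¹ (U g v)
    rwa [hmul, inv_mul_cancel, hone] at this
  · obtain ⟨u, hu⟩ := mem_closure_iff_seq_limit.1 (S.dense w)
    choose a ha using hu.1
    refine measurable_of_tendsto_metrizable (f := fun n g => (inner ℂ v (U g (u n)) : ℂ))
      (fun n => ?_) ?_
    · rw [← ha n]; exact hm1 _ _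
    · rw [tendsto_pi_nhds]
      exact fun g => tendsto_const_nhds.inner (((U g).continuous.tendsto _).comp hu.2)

theorem Sys.repV (S : Sys ω τ j U) : RepU (fun g => U g⁻¹) where
  one v := by rw [inv_one, S.rep.one]
  mul g h v := by rw [S.rep.mul, mul_inv]
  norm g v := S.rep.norm _ _
  meas v w := (S.rep.meas v w).comp S.invm

theorem Sys.u1 (S : Sys ω τ j U) (g : G) : U g (j 1) = j 1 := by rw [S.uj, map_one]

theorem Sys.fixed {μ : Measure G} [MeasurableMul G] (S : Sys ω τ j U) {F : FolnerNetIn μ (Set.univ : Set G)}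
    (hF : F.ErgodicAlong ω τ) (y : H) (hy : ∀ g, U g y = y) :
    y = (inner ℂ (j 1) y : ℂ) • j 1 := by
  have R := S.rep
  suffices h : ∀ a, (inner ℂ (j a) y : ℂ) = inner ℂ (j a) (j 1) * inner ℂ (j 1) y by
    apply ext_inner_left ℂ
    intro v
    refine S.dense.induction_on v (isClosed_eq (by fun_prop) (by fun_prop)) fun a => ?_
    rw [inner_smul_right, h, mul_comm]
  intro a
  have key : ∀ w : H, ‖(inner ℂ (j a) y : ℂ) - inner ℂ (j a) (j 1) * inner ℂ (j 1) w‖ ≤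
      ‖j a‖ * ‖y - w‖ := by
    intro w
    refine S.dense.induction_on w (isClosed_le (by fun_prop) (by fun_prop)) fun b => ?_
    have h1 := hF (star a) b
    have h2 : Tendsto (fun α => ‖(inner ℂ (j a) y : ℂ) -
        avS μ (F.Lam α) (fun g => (inner ℂ (j a) (U g (j b)) : ℂ))‖) atTop
        (𝓝 ‖(inner ℂ (j a) y : ℂ) - inner ℂ (j a) (j 1) * inner ℂ (j 1) (j b)‖) := by
      refine (tendsto_const_nhds.sub ?_).norm
      rw [S.inn a 1, mul_one, ← S.ωeq b]
      refine h1.congr fun α => ?_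
      unfold avS
      simp only [S.uj, S.inn]
    refine le_of_tendsto h2 ?_
    filter_upwards [F.fin] with α hα
    have e : (inner ℂ (j a) y : ℂ) - avS μ (F.Lam α) (fun g => (inner ℂ (j a) (U g (j b)) : ℂ)) =
        avS μ (F.Lam α) (fun g => (inner ℂ (j a) (U g (y - j b)) : ℂ)) := by
      have : ∀ g, (inner ℂ (j a) (U g (y - j b)) : ℂ) =
          inner ℂ (j a) y - inner ℂ (j a) (U g (j b)) := fun g => by
        rw [map_sub, inner_sub_right, hy]
      simp only [this]
      rw [avS_sub _ (R.integ hα.2 _ _), avS_const hα.1 hα.2]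
      exact bdd_integrableOn hα.2 stronglyMeasurable_const fun _ => le_rfl
    rw [e]
    exact avS_norm_le hα.2 (by positivity) fun g _ => R.bound g _ _
  have := key y
  rw [sub_self, norm_zero, mul_zero] at this
  exact sub_eq_zero.1 (norm_le_zero_iff.1 this)

theorem Sys.mean {μ : Measure G} [MeasurableMul G] [μ.IsMulRightInvariant] (S : Sys ω τ j U)
    {F : FolnerNetIn μ (Set.univ : Set G)}
    (hF : F.ErgodicAlong ω τ) {ι : Type*} {l : Filter ι} {Λ : ι → Set G}
    (F' : FNet μ l Λ) {V : G → H →L[ℂ] H} (R : RepU V) (hV : ∀ g, V g (j 1) = j 1)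
    (hVU : ∀ y, (∀ g, V g y = y) → ∀ g, U g y = y) (C : A) :
    ∀ ε > 0, ∀ᶠ α in l, ∀ v, ‖avS μ (Λ α) (fun g => (inner ℂ v (V g (j C)) : ℂ)) -
      inner ℂ v (j 1) * ω C‖ ≤ ε * ‖v‖ := by
  intro ε hε
  have h := mean_erg R F' (j C - ω C • j 1) (fun y hy => by
    rw [S.fixed hF y (hVU y hy), inner_smul_left, inner_sub_right, inner_smul_right, ← S.ωeq,
      ← S.ωeq, S.one]
    simp) ε hε
  filter_upwards [h, F'.fin] with α h1 hα v
  have h2 := h1 v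
  have : ∀ g, (inner ℂ v (V g (j C - ω C • j 1)) : ℂ) =
      inner ℂ v (V g (j C)) - inner ℂ v (j 1) * ω C := fun g => by
    rw [map_sub, map_smul, inner_sub_right, inner_smul_right, hV, mul_comm]
  simp only [this] at h2
  rwa [avS_sub (R.integ hα.2 _ _), avS_const hα.1 hα.2] at h2
  exact bdd_integrableOn hα.2 stronglyMeasurable_const fun _ => le_rfl

end alg

section outer
variable {G : Type*} [MeasurableSpace G] {μ : Measure G}

theorem avS2 {E : Type*} [NormedAddCommGroup E] [NormedSpace ℝ E] (Λ1 Λ2 : Set G)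
    (f : G → G → E) :
    ((μ Λ1).toReal * (μ Λ2).toReal)⁻¹ • ∫ h in Λ1, ∫ g in Λ2, f g h ∂μ ∂μ =
      avS μ Λ1 (fun h => avS μ Λ2 (fun g => f g h)) := by
  unfold avS
  rw [integral_smul, mul_inv, mul_smul]

theorem outer_approx {Λ1 Λ2 : Set G} (h1 : 0 < μ Λ1 ∧ μ Λ1 < ⊤) (h2 : μ Λ2 < ⊤)
    {f : G × G → ℂ} (hf : Measurable f) {K : ℝ} (hK0 : 0 ≤ K) (hK : ∀ q, ‖f q‖ ≤ K)
    {p : G → ℂ} (hp : Measurable p) {L : ℝ} (hL : ∀ h, ‖p h‖ ≤ L)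
    {d : G → ℝ} (hd : Measurable d) {D : ℝ} (hD : ∀ h, ‖d h‖ ≤ D) (ε : ℝ)
    (hle : ∀ h, ‖avS μ Λ2 (fun g => f (g, h)) - p h‖ ≤ d h + ε) :
    ‖avS μ Λ1 (fun h => avS μ Λ2 (fun g => f (g, h))) - avS μ Λ1 p‖ ≤ avS μ Λ1 d + ε := by
  have : IsFiniteMeasure (μ.restrict Λ2) := ⟨by simpa using h2⟩
  have hm : StronglyMeasurable (fun h => avS μ Λ2 (fun g => f (g, h))) :=
    (hf.stronglyMeasurable.integral_prod_left' (μ := μ.restrict Λ2)).const_smul _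
  have hi1 : IntegrableOn (fun h => avS μ Λ2 (fun g => f (g, h))) Λ1 μ :=
    bdd_integrableOn h1.2 hm fun h => avS_norm_le h2 hK0 fun g _ => hK _
  have hi2 : IntegrableOn p Λ1 μ := bdd_integrableOn h1.2 hp.stronglyMeasurable hL
  have hi3 : IntegrableOn d Λ1 μ := bdd_integrableOn h1.2 hd.stronglyMeasurable hD
  have hi4 : IntegrableOn (fun _ => ε) Λ1 μ :=
    bdd_integrableOn h1.2 stronglyMeasurable_const fun _ => le_rfl
  rw [← avS_sub hi1 hi2]
  refine (norm_avS_le _).trans ((avS_mono (fun _ => norm_nonneg _) (hi3.add hi4) hle).trans ?_)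
  have := avS_add hi3 hi4
  rw [avS_const h1.1 h1.2] at this
  exact this.le

end outer

section parts
variable {A : Type*} [NormedRing A] [StarRing A] [CStarRing A] [NormedAlgebra ℂ A]
    [CompleteSpace A] [StarModule ℂ A]
    {G : Type*} [CommGroup G] [MeasurableSpace G] [MeasurableMul G]
    {H : Type*} [NormedAddCommGroup H] [InnerProductSpace ℂ H] [CompleteSpace H]
    {ω : A →ₗ[ℂ] ℂ} {τ : G → A ≃⋆ₐ[ℂ] A} {j : A →ₗ[ℂ] H} {U : G → H →L[ℂ] H}
    {μ : Measure G} [μ.IsMulRightInvariant] {ι : Type*} {l : Filter ι} {Λ1 Λ2 : ι → Set G}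

theorem Sys.part1 (S : Sys ω τ j U) {F : FolnerNetIn μ (Set.univ : Set G)}
    (hF : F.ErgodicAlong ω τ) (F1 : FNet μ l Λ1) (F2 : FNet μ l Λ2)
    (hcomm_meas : ∀ a b : A, Measurable fun g : G => ‖a * τ g b - τ g b * a‖)
    (hmeas5 : ∀ a₁ a₂ a₃ a₄ a₅ : A, Measurable fun q : G × G =>
      ω (τ q.2 a₁ * τ q.1 a₂ * τ (q.1 * q.2) a₃ * τ q.1 a₄ * τ q.2 a₅))
    (hAA : ∀ a' b' : A, Tendsto
      (fun α => (μ (Λ1 α)).toReal⁻¹ * ∫ g in Λ1 α, ‖a' * τ g b' - τ g b' * a'‖ ∂μ)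
      l (𝓝 0)) (a b c : A) (g' h' : G) :
    Tendsto (fun α => ((μ (Λ1 α)).toReal * (μ (Λ2 α)).toReal)⁻¹ •
        ∫ h in Λ1 α, ∫ g in Λ2 α,
          (inner ℂ (j (τ (g * h) a * τ g b * τ h c))
            (j (τ (g * g' * (h * h')) a * τ (g * g') b * τ (h * h') c)) : ℂ) ∂μ ∂μ)
      l (𝓝 (ω (star a * τ (g' * h') a) * ω (star b * τ g' b) * ω (τ h' c * star c))) := by
  set A0 := star a * τ (g' * h') a with hA0
  set B := τ g' b with hB
  set X := star b * B with hX
  set C := τ h' c * star c with hC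
  let f : G × G → ℂ := fun q =>
    ω (τ q.2 (star c) * τ q.1 (star b) * τ (q.1 * q.2) A0 * τ q.1 B * τ q.2 (τ h' c))
  have hfm : Measurable f := hmeas5 _ _ _ _ _
  have hf : ∀ g h, (inner ℂ (j (τ (g * h) a * τ g b * τ h c))
            (j (τ (g * g' * (h * h')) a * τ (g * g') b * τ (h * h') c)) : ℂ) = f (g, h) := by
    intro g h
    simp only [f]
    rw [S.inn, hA0, hB, map_mul (τ (g * h)), S.τmul, S.τmul, S.τmul]
    simp only [star_mul, map_star, mul_assoc]
    rw [mul_left_comm g' h h']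
  simp only [hf]
  simp only [fun α => avS2 (μ := μ) (Λ1 α) (Λ2 α) (fun g h => f (g, h))]
  let K := ‖star c‖ * ‖star b‖ * ‖A0‖ * ‖B‖ * ‖τ h' c‖
  have hK : ∀ q, ‖f q‖ ≤ K := by
    intro q
    refine (S.norm_ω _).trans ?_
    calc _ ≤ ‖τ q.2 (star c)‖ * ‖τ q.1 (star b)‖ * ‖τ (q.1 * q.2) A0‖ * ‖τ q.1 B‖ *
            ‖τ q.2 (τ h' c)‖ := by
          refine (norm_mul_le _ _).trans ?_
          gcongr
          refine (norm_mul_le _ _).trans ?_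
          gcongr
          refine (norm_mul_le _ _).trans ?_
          gcongr
          exact norm_mul_le _ _
      _ = K := by simp only [K, norm_aut]
  let p : G → ℂ := fun h => ω (X * τ h A0) * ω C
  have hp : Measurable p := (S.meas X A0).mul_const _
  have hpn : ∀ h, ‖p h‖ ≤ (‖X‖ * ‖A0‖) * ‖C‖ := by
    intro h
    simp only [p, norm_mul]
    gcongr
    · refine (S.norm_ω _).trans ((norm_mul_le _ _).trans ?_)
      rw [norm_aut]
    · exact S.norm_ω _
  let d0 : G → ℝ := fun h => ‖B * τ h A0 - τ h A0 * B‖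
  let k := ‖star b‖ * ‖C‖
  have hk0 : 0 ≤ k := by positivity
  have hd0 : ∀ h, ‖d0 h‖ ≤ ‖B‖ * ‖A0‖ + ‖A0‖ * ‖B‖ := by
    intro h
    simp only [d0, norm_norm]
    have e := norm_aut (τ h) A0
    refine (norm_sub_le _ _).trans (add_le_add ?_ ?_) <;>
    · refine (norm_mul_le _ _).trans ?_
      rw [e]
  let d : G → ℝ := fun h => k * d0 h
  have hd : Measurable d := (hcomm_meas B A0).const_mul k
  have hdn : ∀ h, ‖d h‖ ≤ k * (‖B‖ * ‖A0‖ + ‖A0‖ * ‖B‖) := by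
    intro h
    simp only [d, norm_mul, Real.norm_of_nonneg hk0]
    gcongr
    exact hd0 h
  -- pointwise comparison
  let v : G → H := fun h => j (star (τ h⁻¹ (X * τ h A0)))
  have hv : ∀ h, ‖v h‖ ≤ ‖X‖ * ‖A0‖ := by
    intro h
    refine (S.norm_j _).trans ?_
    rw [norm_star, norm_aut]
    refine (norm_mul_le _ _).trans ?_
    rw [norm_aut]
  have hf2 : ∀ g h, (inner ℂ (v h) (U g⁻¹ (j C)) : ℂ) = ω (τ g (X * τ h A0) * τ h C) := by
    intro g h
    simp only [v]
    rw [S.uj, ← S.ωmul, ← S.inv (g * h) (_ * _), map_mul, S.τmul, S.τmul,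
      mul_inv_cancel_right, mul_comm g h, mul_inv_cancel_right]
  have hv1 : ∀ h, (inner ℂ (v h) (j 1) : ℂ) * ω C = p h := by
    intro h
    simp only [v, p]
    rw [← S.ωmul, mul_one, S.inv]
  have hcmp : ∀ g h, ‖f (g, h) - inner ℂ (v h) (U g⁻¹ (j C))‖ ≤ d h := by
    intro g h
    have e : f (g, h) - inner ℂ (v h) (U g⁻¹ (j C)) =
        ω (τ g (star b * (τ h A0 * B - B * τ h A0)) * τ h C) := by
      rw [hf2]
      simp only [f]
      rw [mul_assoc (τ h (star c)), mul_assoc (τ h (star c)), mul_assoc (τ h (star c)), S.tr,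
        mul_assoc _ (τ h (τ h' c)), ← map_mul (τ h), ← map_sub, ← hC, ← S.τmul, ← sub_mul,
        ← map_mul, ← map_mul, ← map_sub, hX]
      congr 4
      simp only [mul_sub, mul_assoc]
    rw [e]
    refine (S.norm_ω _).trans ((norm_mul_le _ _).trans ?_)
    rw [norm_aut, norm_aut]
    calc _ ≤ (‖star b‖ * ‖τ h A0 * B - B * τ h A0‖) * ‖C‖ := by
          gcongr; exact norm_mul_le _ _
      _ = d h := by simp only [d, d0, k]; rw [norm_sub_rev]; ring
  -- limits
  have hlim1 : Tendsto (fun α => avS μ (Λ1 α) d) l (𝓝 0) := by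
    have := (hAA B A0).const_mul k
    rw [mul_zero] at this
    refine this.congr fun α => ?_
    simp only [d]
    rw [avS_mul_leftR]
    rfl
  have hlim2 : Tendsto (fun α => avS μ (Λ1 α) p) l (𝓝 (ω X * ω A0 * ω C)) := by
    rw [Metric.tendsto_nhds]
    intro ε hε
    have hε' : 0 < ε / (2 * (‖j (star X)‖ * ‖ω C‖ + 1)) := by positivity
    filter_upwards [S.mean hF F1 S.rep S.u1 (fun y hy => hy) A0 _ hε'] with α h
    have h1 := h (j (star X))
    have e : avS μ (Λ1 α) p =
        ω C * avS μ (Λ1 α) (fun g => (inner ℂ (j (star X)) (U g (j A0)) : ℂ)) := by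
      rw [← avS_mul_left]
      congr 1; funext g
      simp only [p]
      rw [S.uj, ← S.ωmul, mul_comm]
    rw [← S.ωmul, mul_one] at h1
    rw [dist_eq_norm, e, mul_comm (ω X * ω A0), ← mul_sub, norm_mul]
    calc _ ≤ ‖ω C‖ * (ε / (2 * (‖j (star X)‖ * ‖ω C‖ + 1)) * ‖j (star X)‖) := by gcongr
      _ = (ε / 2) * ((‖j (star X)‖ * ‖ω C‖) / (‖j (star X)‖ * ‖ω C‖ + 1)) := by
          field_simp
      _ ≤ (ε / 2) * 1 := by
          gcongr
          rw [div_le_one (by positivity)]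
          linarith
      _ < ε := by linarith
  have hmain : Tendsto (fun α => avS μ (Λ1 α) (fun h => avS μ (Λ2 α) (fun g => f (g, h))) -
      avS μ (Λ1 α) p) l (𝓝 0) := by
    rw [Metric.tendsto_nhds]
    intro ε hε
    have hε' : 0 < ε / (2 * (‖X‖ * ‖A0‖ + 1)) := by positivity
    filter_upwards [S.mean hF F2 S.repV (fun g => S.u1 _)
      (fun y hy g => by simpa using hy g⁻¹) C _ hε', F1.fin, F2.fin,
      hlim1.eventually_lt_const (half_pos hε)] with α h hα1 hα2 h3
    rw [dist_zero_right]
    refine (outer_approx hα1 hα2.2 hfm (by positivity) hK hp hpn hd hdn (ε / 2) ?_).trans_lt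
      (by linarith)
    intro x
    have i1 : IntegrableOn (fun g => f (g, x)) (Λ2 α) μ :=
      bdd_integrableOn hα2.2 (hfm.comp measurable_prodMk_right).stronglyMeasurable fun g => hK _
    have h4 := h (v x)
    rw [hv1] at h4
    have h5 : ‖avS μ (Λ2 α) (fun g => f (g, x)) -
        avS μ (Λ2 α) (fun g => (inner ℂ (v x) (U g⁻¹ (j C)) : ℂ))‖ ≤ d x := by
      rw [← avS_sub i1 (S.repV.integ hα2.2 _ _)]
      exact avS_norm_le hα2.2 ((norm_nonneg _).trans (hcmp 1 x)) fun g _ => hcmp g x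
    have h6 : ε / (2 * (‖X‖ * ‖A0‖ + 1)) * ‖v x‖ ≤ ε / 2 := by
      calc _ ≤ ε / (2 * (‖X‖ * ‖A0‖ + 1)) * (‖X‖ * ‖A0‖ + 1) := by
            gcongr
            linarith [hv x]
        _ = ε / 2 := by field_simp
    refine (norm_sub_le_norm_sub_add_norm_sub _
      (avS μ (Λ2 α) (fun g => (inner ℂ (v x) (U g⁻¹ (j C)) : ℂ))) _).trans ?_
    exact add_le_add h5 (h4.trans h6)
  have := hmain.add hlim2
  simp only [sub_add_cancel, zero_add] at this
  rwa [mul_comm (ω X)] at this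

theorem Sys.flight (S : Sys ω τ j U) {x : H} (hx : x ∈ flightVectors U) :
    ∀ e : H, e ≠ 0 → (∃ lam : G → ℂ, ∀ g, U g e = lam g • e) → (inner ℂ e x : ℂ) = 0 := by
  rintro e he ⟨lam, hlam⟩
  refine hx e (Submodule.le_topologicalClosure _ (Submodule.subset_span ⟨he, lam, fun g => ?_⟩))
  refine ⟨?_, hlam g⟩
  have := S.rep.norm g e
  rw [hlam, norm_smul] at this
  exact mul_right_cancel₀ (norm_ne_zero_iff.2 he) (by rw [this, one_mul])

theorem Sys.part3 [l.NeBot] (S : Sys ω τ j U) (F1 : FNet μ l Λ1) (F2 : FNet μ l Λ2) (a b c : A)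
    (hflight : j a ∈ flightVectors U ∨ j b ∈ flightVectors U ∨ j (star c) ∈ flightVectors U) :
    Tendsto (fun α => ((μ (Λ1 α)).toReal * (μ (Λ2 α)).toReal)⁻¹ *
        ∫ h in Λ1 α, ∫ g in Λ2 α,
          ‖ω (star a * τ (g * h) a) * ω (star b * τ g b) * ω (τ h c * star c)‖ ∂μ ∂μ)
      l (𝓝 0) := by
  have R := S.rep
  refine Tendsto.congr (fun α => (avS2 (μ := μ) (Λ1 α) (Λ2 α) (fun g h =>
    ‖ω (star a * τ (g * h) a) * ω (star b * τ g b) * ω (τ h c * star c)‖)).symm) ?_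
  have ha : ∀ g h, ω (star a * τ (g * h) a) = inner ℂ (U h⁻¹ (j a)) (U g (j a)) := by
    intro g h
    rw [R.adj, inv_inv, R.mul, S.uj, S.inn, mul_comm h g]
  have hb : ∀ g, ω (star b * τ g b) = inner ℂ (j b) (U g (j b)) := by
    intro g
    rw [S.uj, S.inn]
  have hc : ∀ h, ‖ω (τ h c * star c)‖ = ‖(inner ℂ (j (star c)) (U h (j (star c))) : ℂ)‖ := by
    intro h
    rw [norm_inner_symm, S.uj, S.inn, map_star, star_star]
  simp only [norm_mul, ha, hb, hc]
  set KA := ‖j a‖ * ‖j a‖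
  set KB := ‖j b‖ * ‖j b‖
  set KC := ‖j (star c)‖ * ‖j (star c)‖
  have hA : ∀ g h, ‖(inner ℂ (U h⁻¹ (j a)) (U g (j a)) : ℂ)‖ ≤ KA := fun g h =>
    (R.bound _ _ _).trans (by rw [R.norm])
  have hB : ∀ g, ‖(inner ℂ (j b) (U g (j b)) : ℂ)‖ ≤ KB := fun g => R.bound _ _ _
  have hC : ∀ g, ‖(inner ℂ (j (star c)) (U g (j (star c))) : ℂ)‖ ≤ KC := fun g => R.bound _ _ _
  have hKA : 0 ≤ KA := by positivity
  have hKB : 0 ≤ KB := by positivity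
  have hKC : 0 ≤ KC := by positivity
  rw [Metric.tendsto_nhds]
  intro ε hε
  -- it suffices to bound the averages
  suffices h : ∀ᶠ α in l, avS μ (Λ1 α) (fun h => avS μ (Λ2 α) (fun g =>
      ‖(inner ℂ (U h⁻¹ (j a)) (U g (j a)) : ℂ)‖ * ‖(inner ℂ (j b) (U g (j b)) : ℂ)‖ *
      ‖(inner ℂ (j (star c)) (U h (j (star c))) : ℂ)‖)) ≤ ε / 2 by
    filter_upwards [h] with α h
    rw [dist_zero_right, Real.norm_of_nonneg
      (avS_nonneg fun h => avS_nonneg fun g => by positivity)]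
    linarith
  have small : ∀ K : ℝ, 0 ≤ K → K * (ε / (2 * (K + 1))) ≤ ε / 2 := by
    intro K hK
    have e : (K + 1) * (ε / (2 * (K + 1))) = ε / 2 := by field_simp
    rw [← e]
    gcongr
    linarith
  have nint : ∀ {s : Set G} (_ : μ s < ⊤) (v w : H),
      IntegrableOn (fun g => ‖(inner ℂ v (U g w) : ℂ)‖) s μ := fun hs v w => (R.integ hs v w).norm
  rcases hflight with hfl | hfl | hfl
  · filter_upwards [flight_unif1 R F2 _ (S.flight hfl) ‖j a‖ (ε / (2 * (KB * KC + 1)))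
      (by positivity), F1.fin, F2.fin] with α h1 h2 h3
    refine (Real.le_norm_self _).trans (avS_norm_le h2.2 (by positivity) fun h _ => ?_)
    rw [Real.norm_of_nonneg (avS_nonneg fun g => by positivity)]
    refine (avS_mono (fun g => by positivity)
      ((nint h3.2 (U h⁻¹ (j a)) (j a)).const_mul (KB * KC)) fun g => ?_).trans ?_
    · rw [mul_assoc, mul_comm]
      have := hB g
      have := hC h
      gcongr
    · rw [avS_mul_leftR]
      refine le_trans ?_ (small (KB * KC) (by positivity))
      gcongr
      exact h1 _ (R.norm _ _).le
  · filter_upwards [flight_unif1 R F2 _ (S.flight hfl) ‖j b‖ (ε / (2 * (KA * KC + 1)))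
      (by positivity), F1.fin, F2.fin] with α h1 h2 h3
    refine (Real.le_norm_self _).trans (avS_norm_le h2.2 (by positivity) fun h _ => ?_)
    rw [Real.norm_of_nonneg (avS_nonneg fun g => by positivity)]
    refine (avS_mono (fun g => by positivity)
      ((nint h3.2 (j b) (j b)).const_mul (KA * KC)) fun g => ?_).trans ?_
    · rw [mul_right_comm]
      have := hA g h
      have := hC h
      gcongr
    · rw [avS_mul_leftR]
      refine le_trans ?_ (small (KA * KC) (by positivity))
      gcongr
      exact h1 _ le_rfl
  · filter_upwards [flight_unif1 R F1 _ (S.flight hfl) ‖j (star c)‖ (ε / (2 * (KA * KB + 1)))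
      (by positivity), F1.fin, F2.fin] with α h1 h2 h3
    refine (avS_mono (fun h => avS_nonneg fun g => by positivity)
      ((nint h2.2 (j (star c)) (j (star c))).const_mul (KA * KB)) fun h => ?_).trans ?_
    · refine (Real.le_norm_self _).trans (avS_norm_le h3.2 (by positivity) fun g _ => ?_)
      rw [Real.norm_of_nonneg (by positivity)]
      have := hA g h
      have := hB g
      gcongr
    · rw [avS_mul_leftR]
      refine le_trans ?_ (small (KA * KB) (by positivity))
      gcongr
      exact h1 _ le_rfl

end parts

/-- **Lemma 5.3(1).** -/
theorem lemma_5_3_1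
    -- a unital C*-algebra A
    {A : Type*} [NormedRing A] [StarRing A] [CStarRing A] [NormedAlgebra ℂ A]
    [CompleteSpace A] [StarModule ℂ A]
    -- a tracial state ω on A
    (ω : A →ₗ[ℂ] ℂ) (hω_pos : ∀ a : A, 0 ≤ ω (star a * a)) (hω_one : ω 1 = 1)
    (hω_tracial : ∀ a b : A, ω (a * b) = ω (b * a))
    -- a right invariant measure group (G, Σ, μ) with G abelian
    {G : Type*} [CommGroup G] [MeasurableSpace G] (μ : Measure G)
    (hTrans : ∀ (V : Set G) (g : G), MeasurableSet V → MeasurableSet (V * {g}))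
    (hRight : ∀ (V : Set G) (g : G), MeasurableSet V → μ (V * {g}) = μ V)
    (hInvMeas : Measurable (fun g : G => g⁻¹))
    (hInvInv : ∀ V : Set G, MeasurableSet V → μ V⁻¹ = μ V)
    -- the product map p : G × G → G is measurable
    (hProdMeas : Measurable fun q : G × G => q.1 * q.2)
    -- the action τ, making (A, ω, τ, G) a C*-dynamical system (here K = G)
    (τ : G → A ≃⋆ₐ[ℂ] A)
    (hτ_one : ∀ a : A, τ 1 a = a)
    (hτ_mul : ∀ g h a, τ g (τ h a) = τ (g * h) a)
    (hω_inv : ∀ g a, ω (τ g a) = ω a)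
    (hτ_meas : ∀ a b : A, Measurable fun g : G => ω (a * τ g b))
    -- g ↦ ‖[a, τ_g(b)]‖ is measurable
    (hcomm_meas : ∀ a b : A, Measurable fun g : G => ‖a * τ g b - τ g b * a‖)
    -- the system is ergodic (w.r.t. some, equivalently every, Følner net in G)
    (hErg : ∃ F : FolnerNetIn μ (Set.univ : Set G), F.ErgodicAlong ω τ)
    -- (g,h) ↦ ω(τ_h(a₁) τ_g(a₂) τ_{gh}(a₃) τ_g(a₄) τ_h(a₅)) is (Σ × Σ)-measurable
    (hmeas5 : ∀ a₁ a₂ a₃ a₄ a₅ : A, Measurable fun q : G × G =>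
      ω (τ q.2 a₁ * τ q.1 a₂ * τ (q.1 * q.2) a₃ * τ q.1 a₄ * τ q.2 a₅))
    -- Følner nets (Λ1 α), (Λ2 α) in G indexed by the same directed set
    {ι : Type*} [Preorder ι] [Nonempty ι] [IsDirected ι (· ≤ ·)]
    (Λ1 Λ2 : ι → Set G)
    (hΛ1 : ∀ α, MeasurableSet (Λ1 α))
    (hΛ1fin : ∀ᶠ α in atTop, 0 < μ (Λ1 α) ∧ μ (Λ1 α) < ⊤)
    (hΛ1folner : ∀ g : G, Tendsto
      (fun α => (μ (symmDiff (Λ1 α) (Λ1 α * {g}))).toReal / (μ (Λ1 α)).toReal) atTop (𝓝 0))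
    (hΛ2 : ∀ α, MeasurableSet (Λ2 α))
    (hΛ2fin : ∀ᶠ α in atTop, 0 < μ (Λ2 α) ∧ μ (Λ2 α) < ⊤)
    (hΛ2folner : ∀ g : G, Tendsto
      (fun α => (μ (symmDiff (Λ2 α) (Λ2 α * {g}))).toReal / (μ (Λ2 α)).toReal) atTop (𝓝 0))
    -- the nets (Λ1 α⁻¹ Λ1 α) and (Λ2 α⁻¹ Λ2 α) are also Følner in G
    (hΛ1inv : ∀ᶠ α in atTop, MeasurableSet ((Λ1 α)⁻¹ * Λ1 α))
    (hΛ1invfin : ∀ᶠ α in atTop, 0 < μ ((Λ1 α)⁻¹ * Λ1 α) ∧ μ ((Λ1 α)⁻¹ * Λ1 α) < ⊤)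
    (hΛ1invfolner : ∀ g : G, Tendsto
      (fun α => (μ (symmDiff ((Λ1 α)⁻¹ * Λ1 α) (((Λ1 α)⁻¹ * Λ1 α) * {g}))).toReal /
        (μ ((Λ1 α)⁻¹ * Λ1 α)).toReal) atTop (𝓝 0))
    (hΛ2inv : ∀ᶠ α in atTop, MeasurableSet ((Λ2 α)⁻¹ * Λ2 α))
    (hΛ2invfin : ∀ᶠ α in atTop, 0 < μ ((Λ2 α)⁻¹ * Λ2 α) ∧ μ ((Λ2 α)⁻¹ * Λ2 α) < ⊤)
    (hΛ2invfolner : ∀ g : G, Tendsto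
      (fun α => (μ (symmDiff ((Λ2 α)⁻¹ * Λ2 α) (((Λ2 α)⁻¹ * Λ2 α) * {g}))).toReal /
        (μ ((Λ2 α)⁻¹ * Λ2 α)).toReal) atTop (𝓝 0))
    -- a GNS representation (H, j) of (A, ω), with U the GNS representation of τ
    {H : Type*} [NormedAddCommGroup H] [InnerProductSpace ℂ H] [CompleteSpace H]
    (j : A →ₗ[ℂ] H) (hj_dense : DenseRange j)
    (hj_inner : ∀ a b : A, (inner ℂ (j a) (j b) : ℂ) = ω (star a * b))
    (U : G → H →L[ℂ] H) (hU : ∀ g a, U g (j a) = j (τ g a)) (hU_contr : ∀ g, ‖U g‖ ≤ 1)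
    -- a, b, c ∈ A with at least one of ι(a), ι(b), ι(c*) a flight vector
    (a b c : A)
    (hflight : j a ∈ flightVectors U ∨ j b ∈ flightVectors U ∨ j (star c) ∈ flightVectors U)
    -- the system is asymptotically abelian with respect to (Λ1 α)
    (hAA : ∀ a' b' : A, Tendsto
      (fun α => (μ (Λ1 α)).toReal⁻¹ * ∫ g in Λ1 α, ‖a' * τ g b' - τ g b' * a'‖ ∂μ)
      atTop (𝓝 0)) :
    -- conclusion: the limit γ_{g',h'} exists and is given by (5.6); the resulting map
    -- (g, h) ↦ γ_{g,h} is (Σ × Σ)-measurable; and the averages of |γ| over the inverse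
    -- product sets tend to 0
    (∀ g' h' : G, Tendsto
      (fun α => ((μ (Λ1 α)).toReal * (μ (Λ2 α)).toReal)⁻¹ •
        ∫ h in Λ1 α, ∫ g in Λ2 α,
          (inner ℂ (j (τ (g * h) a * τ g b * τ h c))
            (j (τ (g * g' * (h * h')) a * τ (g * g') b * τ (h * h') c)) : ℂ) ∂μ ∂μ)
      atTop (𝓝 (ω (star a * τ (g' * h') a) * ω (star b * τ g' b) * ω (τ h' c * star c)))) ∧
    (Measurable fun q : G × G =>
      ω (star a * τ (q.1 * q.2) a) * ω (star b * τ q.1 b) * ω (τ q.2 c * star c)) ∧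
    Tendsto
      (fun α => ((μ ((Λ1 α)⁻¹ * Λ1 α)).toReal * (μ ((Λ2 α)⁻¹ * Λ2 α)).toReal)⁻¹ *
        ∫ h in (Λ1 α)⁻¹ * Λ1 α, ∫ g in (Λ2 α)⁻¹ * Λ2 α,
          ‖ω (star a * τ (g * h) a) * ω (star b * τ g b) * ω (τ h c * star c)‖ ∂μ ∂μ)
      atTop (𝓝 0) := by
  have hMul2 : MeasurableMul₂ G := ⟨hProdMeas⟩
  have hMI : μ.IsMulRightInvariant := by
    refine ⟨fun g => ?_⟩
    ext V hV
    rw [Measure.map_apply (measurable_mul_const g) hV, ← hRight V g⁻¹ hV]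
    congr 1
    ext x
    simp
  have S : Sys ω τ j U := ⟨hω_pos, hω_one, hω_tracial, hInvMeas, hτ_one, hτ_mul, hω_inv, hτ_meas,
    hj_dense, hj_inner, hU, hU_contr⟩
  obtain ⟨F, hF⟩ := hErg
  refine ⟨fun g' h' => ?_, ?_, ?_⟩
  · exact S.part1 hF ⟨Eventually.of_forall hΛ1, hΛ1fin, hΛ1folner⟩
      ⟨Eventually.of_forall hΛ2, hΛ2fin, hΛ2folner⟩ hcomm_meas hmeas5 hAA a b c g' h'
  · refine (((hτ_meas (star a) a).comp hProdMeas).mul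
      ((hτ_meas (star b) b).comp measurable_fst)).mul ?_
    simp only [fun g => hω_tracial (τ g c) (star c)]
    exact (hτ_meas (star c) c).comp measurable_snd
  · exact S.part3 ⟨hΛ1inv, hΛ1invfin, hΛ1invfolner⟩ ⟨hΛ2inv, hΛ2invfin, hΛ2invfolner⟩ a b c hflight
end
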